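/- arXiv:1412.3782 — 8 statements merged into one kernel-verified Lean document; each statement's English description precedes it below -/
import Mathlib

section
/- Let a < b be real numbers and let y : [a,b] → ℝ be continuously differentiable. Then for every x ∈ [a,b], |y(x) - (y(a)+y(b))/2| ≤ (1/2)·√(b-a)·(∫_a^b y'(t)² dt)^{1/2}; consequently sup_{x∈[a,b]} |y(x)| ≤ (1/2)·|y(a)+y(b)| + (1/2)·√(b-a)·(∫_a^b y'(t)² dt)^{1/2}. -/
open Set intervalIntegral

/-!
By the fundamental theorem of calculus,
`y x - (y a + y b) / 2 = D` where `2 D = ∫_a^x y' - ∫_x^b y' = ∫_a^b ε y'`, with `ε = 1` on `[a,x]`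
and `ε = -1` on `[x,b]`. Cauchy-Schwarz then gives `4 D² ≤ (b - a) ∫_a^b y'²`. It is carried out
here through the expanded square `2 c y' - c² ≤ y'²` (`two_mul_sub_le_integral_sq`), with `c` on
`[a,x]` and `-c` on `[x,b]`: adding the two gives `4 c D - c² (b - a) ≤ ∫_a^b y'²`, which is
optimal at `c = 2 D / (b - a)`.
-/

/-- The inequality `2 c y' - c² ≤ y'²` integrated over `[u,v]`. -/
lemma two_mul_sub_le_integral_sq (u v : ℝ) (huv : u ≤ v) (y y' : ℝ → ℝ)
    (hderiv : ∀ x ∈ Icc u v, HasDerivWithinAt y (y' x) (Icc u v) x)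
    (hcont : ContinuousOn y' (Icc u v)) (c : ℝ) :
    2 * c * (y v - y u) - c ^ 2 * (v - u) ≤ ∫ t in u..v, (y' t) ^ 2 := by
  have hy' : IntervalIntegrable y' MeasureTheory.volume u v :=
    hcont.intervalIntegrable_of_Icc huv
  have hftc : ∫ t in u..v, y' t = y v - y u :=
    integral_eq_sub_of_hasDerivAt_of_le huv (fun x hx => (hderiv x hx).continuousWithinAt)
      (fun x hx => (hderiv x (Ioo_subset_Icc_self hx)).hasDerivAt (Icc_mem_nhds hx.1 hx.2)) hy'
  have hmono : ∫ t in u..v, (2 * c * y' t - c ^ 2) ≤ ∫ t in u..v, (y' t) ^ 2 :=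
    integral_mono_on huv ((hy'.const_mul _).sub intervalIntegrable_const)
      ((hcont.pow 2).intervalIntegrable_of_Icc huv)
      (fun t _ => by nlinarith [sq_nonneg (y' t - c)])
  rw [integral_sub (hy'.const_mul _) intervalIntegrable_const, integral_const_mul, hftc,
    integral_const, smul_eq_mul] at hmono
  linarith

/-- If `y` is `C¹` on `[a,b]` (with derivative `y'` on the interval,
`y'` continuous), then for every `x ∈ [a,b]`,
`|y x - (y a + y b)/2| ≤ (1/2)·√(b-a)·(∫_a^b y'(t)² dt)^{1/2}`, and consequently
`|y x| ≤ (1/2)·|y a + y b| + (1/2)·√(b-a)·(∫_a^b y'(t)² dt)^{1/2}`. -/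
theorem statement0 (a b : ℝ) (hab : a < b) (y y' : ℝ → ℝ)
    (hderiv : ∀ x ∈ Icc a b, HasDerivWithinAt y (y' x) (Icc a b) x)
    (hcont : ContinuousOn y' (Icc a b)) :
    ∀ x ∈ Icc a b,
      |y x - (y a + y b) / 2| ≤
        (1 / 2) * Real.sqrt (b - a) * (∫ t in a..b, (y' t) ^ 2) ^ ((1 : ℝ) / 2) ∧
      |y x| ≤ (1 / 2) * |y a + y b| +
        (1 / 2) * Real.sqrt (b - a) * (∫ t in a..b, (y' t) ^ 2) ^ ((1 : ℝ) / 2) := by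
  intro x hx
  have hl : Icc a x ⊆ Icc a b := Icc_subset_Icc_right hx.2
  have hr : Icc x b ⊆ Icc a b := Icc_subset_Icc_left hx.1
  have hba : 0 < b - a := sub_pos.2 hab
  have key : |y x - (y a + y b) / 2| ≤
      (1 / 2) * Real.sqrt (b - a) * (∫ t in a..b, (y' t) ^ 2) ^ ((1 : ℝ) / 2) := by
    have hadd : (∫ t in a..x, (y' t) ^ 2) + (∫ t in x..b, (y' t) ^ 2) =
        ∫ t in a..b, (y' t) ^ 2 :=
      integral_add_adjacent_intervals
        (((hcont.mono hl).pow 2).intervalIntegrable_of_Icc hx.1)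
        (((hcont.mono hr).pow 2).intervalIntegrable_of_Icc hx.2)
    set D := y x - (y a + y b) / 2 with hD
    set I := ∫ t in a..b, (y' t) ^ 2
    have h1 := two_mul_sub_le_integral_sq a x hx.1 y y'
      (fun t ht => (hderiv t (hl ht)).mono hl) (hcont.mono hl) (2 * D / (b - a))
    have h2 := two_mul_sub_le_integral_sq x b hx.2 y y'
      (fun t ht => (hderiv t (hr ht)).mono hr) (hcont.mono hr) (-(2 * D / (b - a)))
    have h3 : 4 * (2 * D / (b - a)) * D - (2 * D / (b - a)) ^ 2 * (b - a) ≤ I := by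
      rw [← hadd]
      refine le_trans (le_of_eq ?_) (add_le_add h1 h2)
      rw [hD]
      ring
    have h4 : 4 * (2 * D / (b - a)) * D - (2 * D / (b - a)) ^ 2 * (b - a) =
        (2 * D) ^ 2 / (b - a) := by
      field_simp
      ring
    rw [h4, div_le_iff₀ hba] at h3
    have h5 : |2 * D| ≤ Real.sqrt ((b - a) * I) := Real.abs_le_sqrt (by linarith)
    rw [Real.sqrt_mul hba.le, abs_mul, abs_two] at h5
    rw [← Real.sqrt_eq_rpow]
    linarith
  refine ⟨key, ?_⟩
  have htri := abs_add_le (y x - (y a + y b) / 2) ((y a + y b) / 2)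
  rw [sub_add_cancel, abs_div, abs_two] at htri
  linarith
end

section
/- Let a < b be real numbers, let y : [a,b] → ℝ be continuously differentiable, let n ≥ 1 be an integer, and set x_k = a + (k/n)(b-a) for 0 ≤ k ≤ n. Then sup_{x∈[a,b]} |y(x)| ≤ max_{0≤k≤n-1} [ (1/2)·|y(x_k)+y(x_{k+1})| + (1/2)·√((b-a)/n)·(∫_{x_k}^{x_{k+1}} y'(t)² dt)^{1/2} ]. -/
open Set intervalIntegral

/-!
On a single cell `[c, d]`, adding `y x = y c + ∫_c^x y'` and `y x = y d - ∫_x^d y'` gives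
`2 y x = y c + y d + ∫_c^x y' - ∫_x^d y'`, so `2 |y x| ≤ |y c + y d| + ∫_c^d |y'|`, and the
last integral is at most `√(d - c) (∫_c^d y'²)^{1/2}` by Cauchy–Schwarz
(`sq_integral_abs_le`). This is `abs_le_on_cell`; the theorem applies it to the cell of the
partition that contains `x`, of length `(b - a) / n`.
-/

/-- Cauchy–Schwarz against the constant function `1`. -/
lemma sq_integral_abs_le {c d : ℝ} (hcd : c < d) {f : ℝ → ℝ} (hf : ContinuousOn f (Icc c d)) :
    (∫ t in c..d, |f t|) ^ 2 ≤ (d - c) * ∫ t in c..d, (f t) ^ 2 := by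
  have hi1 : IntervalIntegrable (fun t => |f t|) MeasureTheory.volume c d :=
    ContinuousOn.intervalIntegrable_of_Icc hcd.le hf.abs
  have hi2 : IntervalIntegrable (fun t => (f t) ^ 2) MeasureTheory.volume c d :=
    ContinuousOn.intervalIntegrable_of_Icc hcd.le (hf.pow 2)
  set I := ∫ t in c..d, |f t| with hI
  set J := ∫ t in c..d, (f t) ^ 2 with hJ
  have hpos : 0 < d - c := sub_pos.2 hcd
  -- The variance of `|f|` about its mean `I / (d - c)`, cleared of denominators, is nonnegative.
  have h0 : 0 ≤ ∫ t in c..d, ((d - c) * |f t| - I) ^ 2 :=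
    integral_nonneg hcd.le fun t _ => sq_nonneg _
  have h1 : ∫ t in c..d, ((d - c) * |f t| - I) ^ 2
      = (d - c) ^ 2 * J - 2 * (d - c) * I * I + (d - c) * I ^ 2 := by
    have h2 : ∀ t, ((d - c) * |f t| - I) ^ 2
        = (d - c) ^ 2 * (f t) ^ 2 - 2 * (d - c) * I * |f t| + I ^ 2 := by
      intro t
      rw [← sq_abs (f t)]
      ring
    simp_rw [h2]
    rw [integral_add ((hi2.const_mul _).sub (hi1.const_mul _)) intervalIntegrable_const,
      integral_sub (hi2.const_mul _) (hi1.const_mul _), integral_const_mul, integral_const_mul,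
      integral_const, smul_eq_mul]
  rw [h1] at h0
  have h3 : 0 ≤ (d - c) * ((d - c) * J - I ^ 2) := by linarith
  linarith [nonneg_of_mul_nonneg_right h3 hpos]

/-- The case of a single cell. -/
lemma abs_le_on_cell {c d : ℝ} (hcd : c < d) {y y' : ℝ → ℝ}
    (hderiv : ∀ x ∈ Icc c d, HasDerivWithinAt y (y' x) (Icc c d) x)
    (hcont : ContinuousOn y' (Icc c d)) {x : ℝ} (hx : x ∈ Icc c d) :
    |y x| ≤ (1 / 2) * |y c + y d| +
      (1 / 2) * Real.sqrt (d - c) * (∫ t in c..d, (y' t) ^ 2) ^ ((1 : ℝ) / 2) := by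
  have hftc : ∀ u ∈ Icc c d, ∀ v ∈ Icc c d, u ≤ v →
      IntervalIntegrable y' MeasureTheory.volume u v ∧ ∫ t in u..v, y' t = y v - y u := by
    intro u hu v hv huv
    have hsub : Icc u v ⊆ Icc c d := Icc_subset_Icc hu.1 hv.2
    have hi : IntervalIntegrable y' MeasureTheory.volume u v :=
      ContinuousOn.intervalIntegrable_of_Icc huv (hcont.mono hsub)
    refine ⟨hi, integral_eq_sub_of_hasDerivAt_of_le huv
      (fun t ht => (hderiv t (hsub ht)).continuousWithinAt.mono hsub) (fun t ht => ?_) hi⟩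
    exact (hderiv t (hsub (Ioo_subset_Icc_self ht))).hasDerivAt
      (Icc_mem_nhds (hu.1.trans_lt ht.1) (ht.2.trans_le hv.2))
  obtain ⟨hi1, e1⟩ := hftc c (left_mem_Icc.2 hcd.le) x hx hx.1
  obtain ⟨hi2, e2⟩ := hftc x hx d (right_mem_Icc.2 hcd.le) hx.2
  have b1 := abs_integral_le_integral_abs (f := y') (μ := MeasureTheory.volume) hx.1
  have b2 := abs_integral_le_integral_abs (f := y') (μ := MeasureTheory.volume) hx.2
  have hadd := integral_add_adjacent_intervals hi1.abs hi2.abs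
  have hCS := Real.le_sqrt_of_sq_le (sq_integral_abs_le hcd hcont)
  rw [Real.sqrt_mul (sub_pos.2 hcd).le] at hCS
  rw [e1] at b1
  rw [e2] at b2
  rw [← Real.sqrt_eq_rpow]
  have key : 2 * |y x| ≤ |y c + y d| + (|y x - y c| + |y d - y x|) := by
    have h : 2 * y x = (y c + y d) + ((y x - y c) - (y d - y x)) := by ring
    calc 2 * |y x| = |2 * y x| := by rw [abs_mul, abs_two]
      _ ≤ |y c + y d| + |(y x - y c) - (y d - y x)| := by rw [h]; exact abs_add_le _ _
      _ ≤ _ := by gcongr; exact abs_sub _ _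
  linarith

/-- Every point of `[0, n]` lies in some `[k, k + 1]` with `k < n`. -/
lemma exists_cell {n : ℕ} (hn : 1 ≤ n) {s : ℝ} (h0 : 0 ≤ s) (h1 : s ≤ n) :
    ∃ k < n, (k : ℝ) ≤ s ∧ s ≤ k + 1 := by
  rcases h1.lt_or_eq with h | h
  · exact ⟨⌊s⌋₊, (Nat.floor_lt h0).2 h, Nat.floor_le h0, (Nat.lt_floor_add_one s).le⟩
  · refine ⟨n - 1, by omega, ?_, ?_⟩ <;> rw [Nat.cast_sub hn] <;> push_cast <;> linarith

/-- If `y` is `C¹` on `[a,b]` and `x_k = a + (k/n)(b-a)` partition `[a,b]`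
into `n ≥ 1` equal subintervals, then
`sup_{[a,b]} |y| ≤ max_{0≤k≤n-1} [(1/2)|y(x_k)+y(x_{k+1})| + (1/2)√((b-a)/n)(∫_{x_k}^{x_{k+1}} y'²)^{1/2}]`. -/
theorem statement1 (a b : ℝ) (hab : a < b) (y y' : ℝ → ℝ)
    (hderiv : ∀ x ∈ Icc a b, HasDerivWithinAt y (y' x) (Icc a b) x)
    (hcont : ContinuousOn y' (Icc a b)) (n : ℕ) (hn : 1 ≤ n) :
    ∀ x ∈ Icc a b,
      |y x| ≤ (Finset.range n).sup' (Finset.nonempty_range_iff.mpr (by omega))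
        (fun k =>
          (1 / 2) * |y (a + (k : ℝ) / n * (b - a)) + y (a + ((k : ℝ) + 1) / n * (b - a))| +
          (1 / 2) * Real.sqrt ((b - a) / n) *
            (∫ t in (a + (k : ℝ) / n * (b - a))..(a + ((k : ℝ) + 1) / n * (b - a)),
              (y' t) ^ 2) ^ ((1 : ℝ) / 2)) := by
  intro x hx
  have hba : 0 < b - a := sub_pos.2 hab
  have hn0 : (0 : ℝ) < n := by exact_mod_cast hn
  have hx1 : 0 ≤ x - a := sub_nonneg.2 hx.1
  obtain ⟨k, hk, hk1, hk2⟩ := exists_cell hn (s := n * ((x - a) / (b - a))) (by positivity)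
    (mul_le_of_le_one_right hn0.le ((div_le_one hba).2 (by linarith [hx.2])))
  refine le_trans ?_ (Finset.le_sup' _ (Finset.mem_range.2 hk))
  have hxs : x = a + n * ((x - a) / (b - a)) / n * (b - a) := by field_simp; ring
  have hkn : (k : ℝ) + 1 ≤ n := by exact_mod_cast hk
  have hc : a ≤ a + (k : ℝ) / n * (b - a) := le_add_of_nonneg_right (by positivity)
  have hd : a + ((k : ℝ) + 1) / n * (b - a) ≤ b := by
    have := mul_le_of_le_one_left hba.le ((div_le_one hn0).2 hkn)
    linarith
  have hlen : (b - a) / n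
      = (a + ((k : ℝ) + 1) / n * (b - a)) - (a + (k : ℝ) / n * (b - a)) := by
    field_simp; ring
  have hsub := Icc_subset_Icc hc hd
  rw [hlen]
  refine abs_le_on_cell (sub_pos.1 (hlen ▸ div_pos hba hn0))
    (fun t ht => (hderiv t (hsub ht)).mono hsub) (hcont.mono hsub) ⟨?_, ?_⟩
  · rw [hxs]; gcongr
  · rw [hxs]; gcongr
end

section
/- For every t ∈ [-1, 1], P_u(t) > 0. -/
/-! On `[-1, 1]` every power satisfies `|t ^ k| ≤ 1`, so by the triangle inequality
`P_u(t) ≥ c_0 - ∑_{k ≥ 1} |c_k|`, and this lower bound is positive (`sum_abs_cP_lt`). -/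

open Set

noncomputable section

/-- The coefficients `c_0, …, c_22` of the polynomial `P_u`. -/
def cP : ℕ → ℝ
  | 0 => 335867/539062
  | 1 => 419712/989125
  | 2 => -352463/3539236
  | 3 => 60789/1703279
  | 4 => -132842/11825541
  | 5 => 43961/54574472
  | 6 => 39599/12036926
  | 7 => -213665/48625258
  | 8 => 61644/14973337
  | 9 => -107283/33444500
  | 10 => 44761/18892011
  | 11 => -28249/13550715
  | 12 => 20641/14839893
  | 13 => 13459/92774551
  | 14 => -4992/34838093
  | 15 => -11771/8149937
  | 16 => 24115/27631671
  | 17 => 42106/39550107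
  | 18 => -21163/32637441
  | 19 => -9782/15918509
  | 20 => 11581/32652169
  | 21 => 14692/88640147
  | 22 => -12278/123249611
  | _ => 0

/-- The polynomial `P_u(t) = Σ_{k=0}^{22} c_k t^k`. -/
def Pu (t : ℝ) : ℝ := ∑ k ∈ Finset.range 23, cP k * t ^ k

def x₀ : ℝ := -770766/323285
def rP1 : ℝ := 7/10
def LP1 : ℝ := 11/2
def L₀ : ℝ := -49/100

/-- `τ(x) = (x - (L + x₀ + r)/2)/((L - x₀ - r)/2)`, mapping `[x₀+r, L]` onto `[-1,1]`. -/
def τP1 (x : ℝ) : ℝ := (x - (LP1 + x₀ + rP1) / 2) / ((LP1 - x₀ - rP1) / 2)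

/-- `y₀(x) = -1/(x-x₀)² + P_u(τ(x))` on `[x₀+r, L]`. -/
def y₀ (x : ℝ) : ℝ := -1 / (x - x₀) ^ 2 + Pu (τP1 x)

/-- The constant coefficient strictly dominates the sum of the absolute values of the others
(the gap is about `0.025`). -/
theorem sum_abs_cP_lt : ∑ k ∈ Finset.range 22, |cP (k + 1)| < cP 0 := by
  simp only [Finset.sum_range_succ, Finset.sum_range_zero, Nat.reduceAdd, cP, abs_div, abs_neg,
    Nat.abs_ofNat]
  norm_num

/-- For every `t ∈ [-1,1]`, `P_u(t) > 0`. -/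
theorem statement2 : ∀ t ∈ Icc (-1 : ℝ) 1, 0 < Pu t := by
  intro t ht
  have hterm : ∀ k, -|cP (k + 1)| ≤ cP (k + 1) * t ^ (k + 1) := fun k => by
    have h : |cP (k + 1) * t ^ (k + 1)| ≤ |cP (k + 1)| := by
      rw [abs_mul, abs_pow]
      exact mul_le_of_le_one_right (abs_nonneg _)
        (pow_le_one₀ (abs_nonneg t) (abs_le.2 ht))
    exact (abs_le.1 h).1
  have hsum : -∑ k ∈ Finset.range 22, |cP (k + 1)| ≤
      ∑ k ∈ Finset.range 22, cP (k + 1) * t ^ (k + 1) := by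
    rw [← Finset.sum_neg_distrib]
    exact Finset.sum_le_sum fun k _ => hterm k
  rw [Pu, Finset.sum_range_succ', pow_zero, mul_one]
  linarith [sum_abs_cP_lt]

end
end

section
/- For every integer n ≥ 1, |A_n| ≤ 0.21·(3/4)^n and |B_n| ≤ 0.85·(3/4)^n. -/
/-!
Write `r = 3/4`. The weighted sum `∑_{k ≤ 17} |a_k| r^{-k}` is about `0.794`, hence at most `4/5`
(`weighted_sum_le`); this follows by evaluating the fourteen recursively defined coefficients
exactly. Hence, if `|X_j| ≤ r^j` for all `j ≤ n - 4`, the convolution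
`∑ a_k X_{n-4-k}` is at most `(4/5) r^{n-4}` in absolute value (`abs_conv_le`), and the recursions
give `|A_n| ≤ 12 · (4/5) · r^{-4} / (n(n+7)) · r^n` and likewise for `B_n` with `n(n-7)`.
The numerical factor is below `0.21` for `A` as soon as `n ≥ 10` and below `0.85` for `B` as soon
as `n ≥ 11`, so strong induction closes once the finitely many smaller indices
are checked by exact evaluation. The induction hypothesis only needs the weak bound `|X_j| ≤ r^j`,
which also covers `X_0 = 1`.
-/

/-- The sum of the moduli of the coefficients `a_k`, in the weight `(4/3)^k = r^{-k}`, is at most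
`4/5`. -/
lemma weighted_sum_le (a : ℕ → ℝ)
    (h0 : a 0 = 385383/1616425) (h1 : a 1 = -1/6) (h2 : a 2 = 19949/321055) (h3 : a 3 = 0)
    (hrec : ∀ n, 4 ≤ n → n ≤ 17 →
      a n = -(6 / (((n : ℝ) + 5) * ((n : ℝ) - 2))) *
        ∑ k ∈ Finset.range (n - 4 + 1), a k * a (n - 4 - k)) :
    ∑ k ∈ Finset.range 18, |a k| * (4 / 3 : ℝ) ^ k ≤ 4 / 5 := by
  have h4 := hrec 4 (by norm_num) (by norm_num)
  norm_num [Finset.sum_range_succ, h0] at h4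
  have h5 := hrec 5 (by norm_num) (by norm_num)
  norm_num [Finset.sum_range_succ, h0, h1] at h5
  have h6 := hrec 6 (by norm_num) (by norm_num)
  norm_num [Finset.sum_range_succ, h0, h1, h2] at h6
  have h7 := hrec 7 (by norm_num) (by norm_num)
  norm_num [Finset.sum_range_succ, h0, h1, h2, h3] at h7
  have h8 := hrec 8 (by norm_num) (by norm_num)
  norm_num [Finset.sum_range_succ, h0, h1, h2, h3, h4] at h8
  have h9 := hrec 9 (by norm_num) (by norm_num)
  norm_num [Finset.sum_range_succ, h0, h1, h2, h3, h4, h5] at h9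
  have h10 := hrec 10 (by norm_num) (by norm_num)
  norm_num [Finset.sum_range_succ, h0, h1, h2, h3, h4, h5, h6] at h10
  have h11 := hrec 11 (by norm_num) (by norm_num)
  norm_num [Finset.sum_range_succ, h0, h1, h2, h3, h4, h5, h6, h7] at h11
  have h12 := hrec 12 (by norm_num) (by norm_num)
  norm_num [Finset.sum_range_succ, h0, h1, h2, h3, h4, h5, h6, h7, h8] at h12
  have h13 := hrec 13 (by norm_num) (by norm_num)
  norm_num [Finset.sum_range_succ, h0, h1, h2, h3, h4, h5, h6, h7, h8, h9] at h13
  have h14 := hrec 14 (by norm_num) (by norm_num)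
  norm_num [Finset.sum_range_succ, h0, h1, h2, h3, h4, h5, h6, h7, h8, h9, h10] at h14
  have h15 := hrec 15 (by norm_num) (by norm_num)
  norm_num [Finset.sum_range_succ, h0, h1, h2, h3, h4, h5, h6, h7, h8, h9, h10, h11] at h15
  have h16 := hrec 16 (by norm_num) (by norm_num)
  norm_num [Finset.sum_range_succ, h0, h1, h2, h3, h4, h5, h6, h7, h8, h9, h10, h11, h12] at h16
  have h17 := hrec 17 (by norm_num) (by norm_num)
  norm_num [Finset.sum_range_succ, h0, h1, h2, h3, h4, h5, h6, h7, h8, h9, h10, h11, h12, h13] at h17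
  simp only [Finset.sum_range_succ, Finset.sum_range_zero, h0, h1, h2, h3, h4, h5, h6, h7, h8, h9, h10, h11, h12, h13, h14, h15, h16, h17]
  norm_num [abs_of_pos, abs_of_neg]

/-- If `|X_j| ≤ (3/4)^j` for `j ≤ m`, the truncated convolution of `a` with `X` at `m` is
at most `(4/5) (3/4)^m` in modulus. -/
lemma abs_conv_le (a X : ℕ → ℝ) (m : ℕ)
    (ha : ∑ k ∈ Finset.range 18, |a k| * (4 / 3 : ℝ) ^ k ≤ 4 / 5)
    (hX : ∀ j ≤ m, |X j| ≤ (3 / 4 : ℝ) ^ j) :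
    |∑ k ∈ Finset.range (min m 17 + 1), a k * X (m - k)| ≤ 4 / 5 * (3 / 4 : ℝ) ^ m := by
  calc |∑ k ∈ Finset.range (min m 17 + 1), a k * X (m - k)|
      ≤ ∑ k ∈ Finset.range (min m 17 + 1), |a k * X (m - k)| := Finset.abs_sum_le_sum_abs _ _
    _ ≤ ∑ k ∈ Finset.range (min m 17 + 1), |a k| * (4 / 3 : ℝ) ^ k * (3 / 4 : ℝ) ^ m := by
        refine Finset.sum_le_sum fun k hk => ?_
        have hkm : k ≤ m := by
          have := Finset.mem_range.mp hk
          omega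
        have e : (4 / 3 : ℝ) ^ k * (3 / 4 : ℝ) ^ m = (3 / 4 : ℝ) ^ (m - k) := by
          obtain ⟨d, rfl⟩ := Nat.exists_eq_add_of_le hkm
          rw [Nat.add_sub_cancel_left, pow_add, ← mul_assoc, ← mul_pow]
          norm_num
        rw [abs_mul, mul_assoc, e]
        exact mul_le_mul_of_nonneg_left (hX _ (Nat.sub_le _ _)) (abs_nonneg _)
    _ ≤ ∑ k ∈ Finset.range 18, |a k| * (4 / 3 : ℝ) ^ k * (3 / 4 : ℝ) ^ m := by
        refine Finset.sum_le_sum_of_subset_of_nonneg ?_ fun k _ _ => by positivity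
        exact Finset.range_subset_range.mpr (by omega)
    _ = (∑ k ∈ Finset.range 18, |a k| * (4 / 3 : ℝ) ^ k) * (3 / 4 : ℝ) ^ m := by
        rw [Finset.sum_mul]
    _ ≤ 4 / 5 * (3 / 4 : ℝ) ^ m := by gcongr

/-- One step of the induction, for a recursion `X_n = -(12/D) ∑ a_k X_{n-4-k}`: the
condition `hD` says that `12 · (4/5) · (3/4)^{-4} / D ≤ C`. -/
lemma abs_step_le (a X : ℕ → ℝ) (n : ℕ) (hn : 4 ≤ n) (D C : ℝ) (hD0 : 0 < D)
    (hD : 12 * (4 / 5) * (256 / 81) ≤ C * D)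
    (ha : ∑ k ∈ Finset.range 18, |a k| * (4 / 3 : ℝ) ^ k ≤ 4 / 5)
    (hrec : X n = -(12 / D) * ∑ k ∈ Finset.range (min (n - 4) 17 + 1), a k * X (n - 4 - k))
    (hX : ∀ j < n, |X j| ≤ (3 / 4 : ℝ) ^ j) :
    |X n| ≤ C * (3 / 4 : ℝ) ^ n := by
  obtain ⟨m, rfl⟩ := Nat.exists_eq_add_of_le hn
  rw [Nat.add_sub_cancel_left] at hrec
  have hc := abs_conv_le a X m ha fun j hj => hX j (by omega)
  have hC : 12 / D * (4 / 5) ≤ C * (3 / 4) ^ 4 := by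
    rw [div_mul_eq_mul_div, div_le_iff₀ hD0]
    nlinarith
  rw [hrec, abs_mul, abs_neg, abs_of_pos (by positivity : 0 < 12 / D), pow_add]
  calc 12 / D * |∑ k ∈ Finset.range (min m 17 + 1), a k * X (m - k)|
      ≤ 12 / D * (4 / 5 * (3 / 4 : ℝ) ^ m) := by gcongr
    _ = 12 / D * (4 / 5) * (3 / 4 : ℝ) ^ m := by ring
    _ ≤ C * (3 / 4) ^ 4 * (3 / 4 : ℝ) ^ m := by gcongr
    _ = C * ((3 / 4) ^ 4 * (3 / 4 : ℝ) ^ m) := by ring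

/-- Strong induction from the bound at the indices `1 ≤ n < N` and the inductive step from `N` on;
as `C ≤ 1`, the step may use the weak bound `|X_j| ≤ (3/4)^j`, valid also at `j = 0`. -/
lemma abs_le_of_step (X : ℕ → ℝ) (N : ℕ) (C : ℝ) (hC : C ≤ 1) (hX0 : X 0 = 1)
    (hsmall : ∀ n, 1 ≤ n → n < N → |X n| ≤ C * (3 / 4 : ℝ) ^ n)
    (hstep : ∀ n, N ≤ n → (∀ j < n, |X j| ≤ (3 / 4 : ℝ) ^ j) → |X n| ≤ C * (3 / 4 : ℝ) ^ n) :
    ∀ n, 1 ≤ n → |X n| ≤ C * (3 / 4 : ℝ) ^ n := by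
  intro n
  induction n using Nat.strong_induction_on with
  | _ n ih =>
    intro hn
    rcases lt_or_ge n N with h | h
    · exact hsmall n hn h
    · refine hstep n h fun j hj => ?_
      rcases Nat.eq_zero_or_pos j with rfl | hj0
      · simp [hX0]
      · exact (ih j hj hj0).trans (mul_le_of_le_one_left (by positivity) hC)

/-- With the sequences `(a_n)`, `(A_n)`, `(B_n)` of the paper
(coefficients of the local series of the tritronquée solution near `x₀` and of the two
homogeneous solutions `G₁`, `G₂`), one has `|A_n| ≤ 0.21·(3/4)ⁿ` and `|B_n| ≤ 0.85·(3/4)ⁿ`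
for every `n ≥ 1`. -/
theorem statement4 (x₀ : ℝ) (hx₀ : x₀ = -770766/323285) (a A B : ℕ → ℝ)
    (h0 : a 0 = -x₀ / 10) (h1 : a 1 = -1/6) (h2 : a 2 = 19949/321055) (h3 : a 3 = 0)
    (hrec : ∀ n, 4 ≤ n → n ≤ 17 →
      a n = -(6 / (((n : ℝ) + 5) * ((n : ℝ) - 2))) *
        ∑ k ∈ Finset.range (n - 4 + 1), a k * a (n - 4 - k))
    (hA0 : A 0 = 1) (hA1 : A 1 = 0) (hA2 : A 2 = 0) (hA3 : A 3 = 0)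
    (hArec : ∀ n, 4 ≤ n →
      A n = -(12 / ((n : ℝ) * ((n : ℝ) + 7))) *
        ∑ k ∈ Finset.range (min (n - 4) 17 + 1), a k * A (n - 4 - k))
    (hB0 : B 0 = 1) (hB1 : B 1 = 0) (hB2 : B 2 = 0) (hB3 : B 3 = 0) (hB7 : B 7 = 0)
    (hBrec : ∀ n, 4 ≤ n → n ≠ 7 →
      B n = -(12 / ((n : ℝ) * ((n : ℝ) - 7))) *
        ∑ k ∈ Finset.range (min (n - 4) 17 + 1), a k * B (n - 4 - k)) :
    ∀ n : ℕ, 1 ≤ n →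
      |A n| ≤ 0.21 * (3 / 4 : ℝ) ^ n ∧ |B n| ≤ 0.85 * (3 / 4 : ℝ) ^ n := by
  have h0' : a 0 = 385383/1616425 := by rw [h0, hx₀]; norm_num
  have ha := weighted_sum_le a h0' h1 h2 h3 hrec
  have h4 := hrec 4 (by norm_num) (by norm_num)
  have h5 := hrec 5 (by norm_num) (by norm_num)
  have h6 := hrec 6 (by norm_num) (by norm_num)
  norm_num [Finset.sum_range_succ, h0', h1, h2] at h4 h5 h6
  have hA : ∀ n, 1 ≤ n → |A n| ≤ 0.21 * (3 / 4 : ℝ) ^ n := by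
    refine abs_le_of_step A 10 _ (by norm_num) hA0 (fun n hn1 hn2 => ?_) fun n hn hX => ?_
    swap
    · have hn' : (10 : ℝ) ≤ n := by exact_mod_cast hn
      exact abs_step_le a A n (by omega) _ _ (by positivity) (by nlinarith) ha
        (hArec n (by omega)) hX
    have hA4 := hArec 4 (by norm_num)
    norm_num [Finset.sum_range_succ, h0', hA0] at hA4
    have hA5 := hArec 5 (by norm_num)
    norm_num [Finset.sum_range_succ, h0', h1, hA0, hA1] at hA5
    have hA6 := hArec 6 (by norm_num)
    norm_num [Finset.sum_range_succ, h0', h1, h2, hA0, hA1, hA2] at hA6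
    have hA7 := hArec 7 (by norm_num)
    norm_num [Finset.sum_range_succ, h0', h1, h2, h3, hA0, hA1, hA2, hA3] at hA7
    have hA8 := hArec 8 (by norm_num)
    norm_num [Finset.sum_range_succ, h0', h1, h2, h3, h4, hA0, hA1, hA2, hA3, hA4] at hA8
    have hA9 := hArec 9 (by norm_num)
    norm_num [Finset.sum_range_succ, h0', h1, h2, h3, h4, h5, hA0, hA1, hA2, hA3, hA4, hA5] at hA9
    interval_cases n
    · norm_num [hA1, abs_of_pos, abs_of_neg]
    · norm_num [hA2, abs_of_pos, abs_of_neg]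
    · norm_num [hA3, abs_of_pos, abs_of_neg]
    · norm_num [hA4, abs_of_pos, abs_of_neg]
    · norm_num [hA5, abs_of_pos, abs_of_neg]
    · norm_num [hA6, abs_of_pos, abs_of_neg]
    · norm_num [hA7, abs_of_pos, abs_of_neg]
    · norm_num [hA8, abs_of_pos, abs_of_neg]
    · norm_num [hA9, abs_of_pos, abs_of_neg]
  have hB : ∀ n, 1 ≤ n → |B n| ≤ 0.85 * (3 / 4 : ℝ) ^ n := by
    refine abs_le_of_step B 11 _ (by norm_num) hB0 (fun n hn1 hn2 => ?_) fun n hn hX => ?_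
    swap
    · have hn' : (11 : ℝ) ≤ n := by exact_mod_cast hn
      exact abs_step_le a B n (by omega) _ _ (mul_pos (by linarith) (by linarith))
        (by nlinarith) ha (hBrec n (by omega) (by omega)) hX
    have hB4 := hBrec 4 (by norm_num) (by norm_num)
    norm_num [Finset.sum_range_succ, h0', hB0] at hB4
    have hB5 := hBrec 5 (by norm_num) (by norm_num)
    norm_num [Finset.sum_range_succ, h0', h1, hB0, hB1] at hB5
    have hB6 := hBrec 6 (by norm_num) (by norm_num)
    norm_num [Finset.sum_range_succ, h0', h1, h2, hB0, hB1, hB2] at hB6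
    have hB8 := hBrec 8 (by norm_num) (by norm_num)
    norm_num [Finset.sum_range_succ, h0', h1, h2, h3, h4, hB0, hB1, hB2, hB3, hB4] at hB8
    have hB9 := hBrec 9 (by norm_num) (by norm_num)
    norm_num [Finset.sum_range_succ, h0', h1, h2, h3, h4, h5, hB0, hB1, hB2, hB3, hB4, hB5] at hB9
    have hB10 := hBrec 10 (by norm_num) (by norm_num)
    norm_num [Finset.sum_range_succ, h0', h1, h2, h3, h4, h5, h6, hB0, hB1, hB2, hB3, hB4, hB5, hB6] at hB10
    interval_cases n
    · norm_num [hB1, abs_of_pos, abs_of_neg]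
    · norm_num [hB2, abs_of_pos, abs_of_neg]
    · norm_num [hB3, abs_of_pos, abs_of_neg]
    · norm_num [hB4, abs_of_pos, abs_of_neg]
    · norm_num [hB5, abs_of_pos, abs_of_neg]
    · norm_num [hB6, abs_of_pos, abs_of_neg]
    · norm_num [hB7, abs_of_pos, abs_of_neg]
    · norm_num [hB8, abs_of_pos, abs_of_neg]
    · norm_num [hB9, abs_of_pos, abs_of_neg]
    · norm_num [hB10, abs_of_pos, abs_of_neg]
  exact fun n hn => ⟨hA n hn, hB n hn⟩
end

section
/- The series G_1(ζ) = Σ_{n=0}^∞ A_n ζ^{n+4} and G_2(ζ) = Σ_{n=0}^∞ B_n ζ^{n-3}, together with their term-by-term derivatives, converge for every ζ ∈ ℂ with |ζ| = 7/10, and there one has |G_1(ζ)| ≤ 0.249, |G_2(ζ)| ≤ 3.32, |G_1'(ζ)| ≤ 1.48, and |G_2'(ζ)| ≤ 13.7. -/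
/-!
The term-by-term absolute bounds are already sharp enough, so it suffices to control
`∑ |A n| (7/10)^(n+4)` and its three analogues. Each of these series is split at `n = 11`.

* For `n < 11` the recursions give `A n` and `B n` as explicit rational numbers.
* For all `n` one has `|A n|, |B n| ≤ (11/10) (5/7)^n` (`geometric_bound`). The inductive step works
  from `n = 11` on, because there `12 / (n (n ± 7)) ≤ 3/11`, while
  `∑ k ≤ 17, |a k| (7/5)^(k+4) ≤ 11/3` by computing the rational numbers `a k`.

On `|ζ| = 7/10` the geometric bound makes the `n`-th terms `O(n / 2^n)`, and the tails of the four
series are estimated by `∑ n ≥ 11, (c + d n) / 2^n = (c + 12 d) / 1024`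
(`exists_hasSum_norm_le`).
-/

/-- The recursion propagates the geometric bound `C (5/7)^n` from the first eleven terms to all
terms: with `|X m| ≤ C (5/7)^m` for `m < n`, the right-hand side of the recursion is at most
`(3/11) C (5/7)^n ∑ k ≤ 17, |a k| (7/5)^(k+4)`. -/
lemma geometric_bound (a X w : ℕ → ℝ) (C : ℝ) (hC : 0 ≤ C)
    (ha : ∑ k ∈ Finset.range 18, |a k| * (7/5) ^ (k + 4) ≤ 11/3)
    (hw : ∀ n, 11 ≤ n → |w n| ≤ 3/11)
    (hX : ∀ n, 11 ≤ n →
      X n = w n * ∑ k ∈ Finset.range (min (n - 4) 17 + 1), a k * X (n - 4 - k))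
    (hinit : ∀ n, n < 11 → |X n| ≤ C * (5/7) ^ n) (n : ℕ) :
    |X n| ≤ C * (5/7) ^ n := by
  induction n using Nat.strong_induction_on with
  | _ n ih =>
    rcases lt_or_ge n 11 with hn | hn
    · exact hinit n hn
    have hsum : |∑ k ∈ Finset.range (min (n - 4) 17 + 1), a k * X (n - 4 - k)|
        ≤ C * (5/7) ^ n * (11/3) := by
      calc |∑ k ∈ Finset.range (min (n - 4) 17 + 1), a k * X (n - 4 - k)|
          ≤ ∑ k ∈ Finset.range (min (n - 4) 17 + 1), |a k * X (n - 4 - k)| :=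
            Finset.abs_sum_le_sum_abs _ _
        _ ≤ ∑ k ∈ Finset.range (min (n - 4) 17 + 1),
              C * (5/7) ^ n * (|a k| * (7/5) ^ (k + 4)) := by
            refine Finset.sum_le_sum fun k hk => ?_
            have hk' : k + 4 ≤ n := by
              have := Finset.mem_range.mp hk
              omega
            have h1 := ih (n - 4 - k) (by omega)
            have h2 : ((5:ℝ)/7) ^ n * (7/5) ^ (k + 4) = (5/7) ^ (n - 4 - k) := by
              obtain ⟨m, rfl⟩ := Nat.exists_eq_add_of_le' hk'
              have h3 : m + (k + 4) - 4 - k = m := by omega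
              rw [h3, pow_add, mul_assoc, ← mul_pow]
              norm_num
            rw [abs_mul]
            calc |a k| * |X (n - 4 - k)| ≤ |a k| * (C * (5/7) ^ (n - 4 - k)) := by gcongr
              _ = C * (5/7) ^ n * (|a k| * (7/5) ^ (k + 4)) := by rw [← h2]; ring
        _ ≤ ∑ k ∈ Finset.range 18, C * (5/7) ^ n * (|a k| * (7/5) ^ (k + 4)) := by
            refine Finset.sum_le_sum_of_subset_of_nonneg ?_ fun _ _ _ => by positivity
            exact Finset.range_subset_range.mpr (by omega)
        _ ≤ C * (5/7) ^ n * (11/3) := by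
            rw [← Finset.mul_sum]
            gcongr
    rw [hX n hn, abs_mul]
    calc |w n| * |∑ k ∈ Finset.range (min (n - 4) 17 + 1), a k * X (n - 4 - k)|
        ≤ 3/11 * (C * (5/7) ^ n * (11/3)) := by
          gcongr
          exact hw n hn
      _ = C * (5/7) ^ n := by ring

lemma abs_weight_le (x s : ℝ) (hx : 11 ≤ x) (hs : -7 ≤ s) :
    |-(12 / (x * (x + s)))| ≤ 3/11 := by
  have hpos : 0 < x * (x + s) := mul_pos (by linarith) (by linarith)
  rw [abs_neg, abs_of_pos (by positivity), div_le_iff₀ hpos]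
  nlinarith [mul_le_mul hx (show 4 ≤ x + s by linarith) (by norm_num) (by linarith)]

/-- A series whose terms are at most `(c + d n) / 2^n` for `n ≥ 11` converges, and its tail from
`n = 11` on contributes at most `∑ n ≥ 11, (c + d n) / 2^n = (c + 12 d) / 1024`. -/
lemma exists_hasSum_norm_le (f : ℕ → ℂ) (c d M : ℝ)
    (hf : ∀ n, 11 ≤ n → ‖f n‖ ≤ (c + d * n) * (1/2) ^ n)
    (hM : ∑ n ∈ Finset.range 11, ‖f n‖ + (c + 12 * d) / 1024 ≤ M) :
    ∃ g, HasSum f g ∧ ‖g‖ ≤ M := by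
  have htail : HasSum (fun n : ℕ => (c + d * ((n + 11 : ℕ) : ℝ)) * (1/2) ^ (n + 11))
      ((c + 12 * d) / 1024) := by
    have h1 := hasSum_geometric_of_lt_one (r := (1/2 : ℝ)) (by norm_num) (by norm_num)
    have h2 := hasSum_coe_mul_geometric_of_norm_lt_one (r := (1/2 : ℝ)) (by norm_num)
    have h3 := (h1.mul_left ((c + 11 * d) / 2048)).add (h2.mul_left (d / 2048))
    have h4 : (c + 11 * d) / 2048 * (1 - 1/2 : ℝ)⁻¹ + d / 2048 * (1/2 / (1 - 1/2) ^ 2)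
        = (c + 12 * d) / 1024 := by
      norm_num
      ring
    rw [h4] at h3
    have h5 : (fun n : ℕ => (c + d * ((n + 11 : ℕ) : ℝ)) * (1/2) ^ (n + 11)) =
        fun n : ℕ => (c + 11 * d) / 2048 * (1/2) ^ n + d / 2048 * (n * (1/2) ^ n) := by
      funext n
      push_cast
      ring
    rw [h5]
    exact h3
  have hle : ∀ n : ℕ, ‖f (n + 11)‖ ≤ (c + d * ((n + 11 : ℕ) : ℝ)) * (1/2) ^ (n + 11) :=
    fun n => hf (n + 11) (by omega)
  have hs : Summable f := (summable_nat_add_iff 11).mp (.of_norm_bounded htail.summable hle)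
  refine ⟨∑' n, f n, hs.hasSum, ?_⟩
  rw [← hs.sum_add_tsum_nat_add 11]
  calc ‖∑ n ∈ Finset.range 11, f n + ∑' n, f (n + 11)‖
      ≤ ‖∑ n ∈ Finset.range 11, f n‖ + ‖∑' n, f (n + 11)‖ := norm_add_le _ _
    _ ≤ ∑ n ∈ Finset.range 11, ‖f n‖ + (c + 12 * d) / 1024 :=
        add_le_add (norm_sum_le _ _) (tsum_of_norm_bounded htail hle)
    _ ≤ M := hM

set_option maxHeartbeats 4000000 in
/-- On the circle `|ζ| = 7/10`, the series
`G₁(ζ) = Σ_{n≥0} A_n ζ^{n+4}`, `G₂(ζ) = Σ_{n≥0} B_n ζ^{n-3}` and their term-by-term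
derivatives converge, with `|G₁(ζ)| ≤ 0.249`, `|G₂(ζ)| ≤ 3.32`, `|G₁'(ζ)| ≤ 1.48`,
`|G₂'(ζ)| ≤ 13.7`. -/
theorem statement5 (x₀ : ℝ) (hx₀ : x₀ = -770766/323285) (a A B : ℕ → ℝ)
    (h0 : a 0 = -x₀ / 10) (h1 : a 1 = -1/6) (h2 : a 2 = 19949/321055) (h3 : a 3 = 0)
    (hrec : ∀ n, 4 ≤ n → n ≤ 17 →
      a n = -(6 / (((n : ℝ) + 5) * ((n : ℝ) - 2))) *
        ∑ k ∈ Finset.range (n - 4 + 1), a k * a (n - 4 - k))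
    (hA0 : A 0 = 1) (hA1 : A 1 = 0) (hA2 : A 2 = 0) (hA3 : A 3 = 0)
    (hArec : ∀ n, 4 ≤ n →
      A n = -(12 / ((n : ℝ) * ((n : ℝ) + 7))) *
        ∑ k ∈ Finset.range (min (n - 4) 17 + 1), a k * A (n - 4 - k))
    (hB0 : B 0 = 1) (hB1 : B 1 = 0) (hB2 : B 2 = 0) (hB3 : B 3 = 0) (hB7 : B 7 = 0)
    (hBrec : ∀ n, 4 ≤ n → n ≠ 7 →
      B n = -(12 / ((n : ℝ) * ((n : ℝ) - 7))) *
        ∑ k ∈ Finset.range (min (n - 4) 17 + 1), a k * B (n - 4 - k)) :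
    ∀ ζ : ℂ, ‖ζ‖ = 7/10 →
      ∃ g₁ g₂ d₁ d₂ : ℂ,
        HasSum (fun n : ℕ => (A n : ℂ) * ζ ^ (n + 4)) g₁ ∧
        HasSum (fun n : ℕ => (B n : ℂ) * ζ ^ ((n : ℤ) - 3)) g₂ ∧
        HasSum (fun n : ℕ => ((n : ℂ) + 4) * (A n : ℂ) * ζ ^ (n + 3)) d₁ ∧
        HasSum (fun n : ℕ => ((n : ℂ) - 3) * (B n : ℂ) * ζ ^ ((n : ℤ) - 4)) d₂ ∧
        ‖g₁‖ ≤ 0.249 ∧ ‖g₂‖ ≤ 3.32 ∧ ‖d₁‖ ≤ 1.48 ∧ ‖d₂‖ ≤ 13.7 := by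
  subst hx₀
  -- Exact rational values of `a 0, …, a 17`, and below of `A n` and `B n` for `n ≤ 10`.
  norm_num at h0
  have h4 := hrec 4 (by norm_num) (by norm_num)
  norm_num [Finset.sum_range_succ, h0] at h4
  have h5 := hrec 5 (by norm_num) (by norm_num)
  norm_num [Finset.sum_range_succ, h0, h1] at h5
  have h6 := hrec 6 (by norm_num) (by norm_num)
  norm_num [Finset.sum_range_succ, h0, h1, h2] at h6
  have h7 := hrec 7 (by norm_num) (by norm_num)
  norm_num [Finset.sum_range_succ, h0, h1, h2, h3] at h7
  have h8 := hrec 8 (by norm_num) (by norm_num)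
  norm_num [Finset.sum_range_succ, h0, h1, h2, h3, h4] at h8
  have h9 := hrec 9 (by norm_num) (by norm_num)
  norm_num [Finset.sum_range_succ, h0, h1, h2, h3, h4, h5] at h9
  have h10 := hrec 10 (by norm_num) (by norm_num)
  norm_num [Finset.sum_range_succ, h0, h1, h2, h3, h4, h5, h6] at h10
  have h11 := hrec 11 (by norm_num) (by norm_num)
  norm_num [Finset.sum_range_succ, h0, h1, h2, h3, h4, h5, h6, h7] at h11
  have h12 := hrec 12 (by norm_num) (by norm_num)
  norm_num [Finset.sum_range_succ, h0, h1, h2, h3, h4, h5, h6, h7, h8] at h12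
  have h13 := hrec 13 (by norm_num) (by norm_num)
  norm_num [Finset.sum_range_succ, h0, h1, h2, h3, h4, h5, h6, h7, h8, h9] at h13
  have h14 := hrec 14 (by norm_num) (by norm_num)
  norm_num [Finset.sum_range_succ, h0, h1, h2, h3, h4, h5, h6, h7, h8, h9, h10] at h14
  have h15 := hrec 15 (by norm_num) (by norm_num)
  norm_num [Finset.sum_range_succ, h0, h1, h2, h3, h4, h5, h6, h7, h8, h9, h10, h11] at h15
  have h16 := hrec 16 (by norm_num) (by norm_num)
  norm_num [Finset.sum_range_succ, h0, h1, h2, h3, h4, h5, h6, h7, h8, h9, h10, h11, h12] at h16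
  have h17 := hrec 17 (by norm_num) (by norm_num)
  norm_num [Finset.sum_range_succ, h0, h1, h2, h3, h4, h5, h6, h7, h8, h9, h10, h11, h12,
    h13] at h17
  have ha : ∑ k ∈ Finset.range 18, |a k| * (7/5) ^ (k + 4) ≤ 11/3 := by
    simp only [Finset.sum_range_succ, Finset.sum_range_zero, h0, h1, h2, h3, h4, h5, h6, h7, h8,
      h9, h10, h11, h12, h13, h14, h15, h16, h17]
    norm_num [abs_div]
  have hA4 := hArec 4 (by norm_num)
  norm_num [Finset.sum_range_succ, h0, hA0] at hA4
  have hA5 := hArec 5 (by norm_num)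
  norm_num [Finset.sum_range_succ, h0, h1, hA0, hA1] at hA5
  have hA6 := hArec 6 (by norm_num)
  norm_num [Finset.sum_range_succ, h0, h1, h2, hA0, hA1, hA2] at hA6
  have hA7 := hArec 7 (by norm_num)
  norm_num [Finset.sum_range_succ, h0, h1, h2, h3, hA0, hA1, hA2, hA3] at hA7
  have hA8 := hArec 8 (by norm_num)
  norm_num [Finset.sum_range_succ, h0, h1, h2, h3, h4, hA0, hA1, hA2, hA3, hA4] at hA8
  have hA9 := hArec 9 (by norm_num)
  norm_num [Finset.sum_range_succ, h0, h1, h2, h3, h4, h5, hA0, hA1, hA2, hA3, hA4, hA5] at hA9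
  have hA10 := hArec 10 (by norm_num)
  norm_num [Finset.sum_range_succ, h0, h1, h2, h3, h4, h5, h6, hA0, hA1, hA2, hA3, hA4, hA5,
    hA6] at hA10
  have hB4 := hBrec 4 (by norm_num) (by norm_num)
  norm_num [Finset.sum_range_succ, h0, hB0] at hB4
  have hB5 := hBrec 5 (by norm_num) (by norm_num)
  norm_num [Finset.sum_range_succ, h0, h1, hB0, hB1] at hB5
  have hB6 := hBrec 6 (by norm_num) (by norm_num)
  norm_num [Finset.sum_range_succ, h0, h1, h2, hB0, hB1, hB2] at hB6
  have hB8 := hBrec 8 (by norm_num) (by norm_num)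
  norm_num [Finset.sum_range_succ, h0, h1, h2, h3, h4, hB0, hB1, hB2, hB3, hB4] at hB8
  have hB9 := hBrec 9 (by norm_num) (by norm_num)
  norm_num [Finset.sum_range_succ, h0, h1, h2, h3, h4, h5, hB0, hB1, hB2, hB3, hB4, hB5] at hB9
  have hB10 := hBrec 10 (by norm_num) (by norm_num)
  norm_num [Finset.sum_range_succ, h0, h1, h2, h3, h4, h5, h6, hB0, hB1, hB2, hB3, hB4, hB5,
    hB6] at hB10
  have hA : ∀ n, |A n| ≤ 11/10 * (5/7) ^ n := by
    refine geometric_bound a A (fun n => -(12 / ((n : ℝ) * ((n : ℝ) + 7)))) (11/10) (by norm_num)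
      ha ?_ (fun n hn => hArec n (by omega)) fun n hn => ?_
    · intro n hn
      have hn' : (11 : ℝ) ≤ n := by exact_mod_cast hn
      exact abs_weight_le n 7 hn' (by norm_num)
    · clear hrec hArec hBrec
      interval_cases n <;> simp only [hA0, hA1, hA2, hA3, hA4, hA5, hA6, hA7, hA8, hA9, hA10] <;>
        norm_num [abs_div]
  have hB : ∀ n, |B n| ≤ 11/10 * (5/7) ^ n := by
    refine geometric_bound a B (fun n => -(12 / ((n : ℝ) * ((n : ℝ) - 7)))) (11/10) (by norm_num)
      ha ?_ (fun n hn => hBrec n (by omega) (by omega)) fun n hn => ?_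
    · intro n hn
      have hn' : (11 : ℝ) ≤ n := by exact_mod_cast hn
      simpa only [sub_eq_add_neg] using abs_weight_le n (-7) hn' (by norm_num)
    · clear hrec hArec hBrec
      interval_cases n <;> simp only [hB0, hB1, hB2, hB3, hB4, hB5, hB6, hB7, hB8, hB9, hB10] <;>
        norm_num [abs_div]
  intro ζ hζ
  -- The factor `(5/7)^n` from the coefficients and `|ζ|^n` combine to `1/2^n`.
  have hpow : ∀ n : ℕ, ((5 : ℝ)/7) ^ n * (7/10) ^ n = (1/2) ^ n := fun n => by
    rw [← mul_pow]
    norm_num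
  have hzpow : ∀ n m : ℕ, (7/10 : ℝ) ^ ((n : ℤ) - (m : ℤ)) = (7/10) ^ n * (10/7) ^ m := by
    intro n m
    rw [zpow_sub₀ (by norm_num), zpow_natCast, zpow_natCast, div_eq_mul_inv, ← inv_pow, inv_div]
  obtain ⟨g₁, hg₁, hg₁'⟩ :
      ∃ g : ℂ, HasSum (fun n : ℕ => (A n : ℂ) * ζ ^ (n + 4)) g ∧ ‖g‖ ≤ 0.249 := by
    have hnorm : ∀ n : ℕ, ‖(A n : ℂ) * ζ ^ (n + 4)‖
        = |A n| * ((7/10) ^ n * (7/10) ^ 4) := by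
      intro n
      rw [norm_mul, norm_pow, hζ, Complex.norm_real, Real.norm_eq_abs, pow_add]
    refine exists_hasSum_norm_le _ (11/10 * (7/10) ^ 4) 0 _ (fun n hn => ?_) ?_
    · have hXn := hA n
      rw [hnorm]
      calc _ ≤ (11/10 * (5/7) ^ n) * ((7/10) ^ n * (7/10) ^ 4) := by gcongr
        _ = (11/10 * (7/10) ^ 4 + 0 * (n : ℝ)) * (1/2 : ℝ) ^ n := by
          rw [← hpow]
          ring
    · simp only [hnorm, Finset.sum_range_succ, Finset.sum_range_zero, hA0, hA1, hA2, hA3, hA4,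
        hA5, hA6, hA7, hA8, hA9, hA10]
      norm_num [abs_div]
  obtain ⟨g₂, hg₂, hg₂'⟩ :
      ∃ g : ℂ, HasSum (fun n : ℕ => (B n : ℂ) * ζ ^ ((n : ℤ) - 3)) g ∧ ‖g‖ ≤ 3.32 := by
    have hnorm : ∀ n : ℕ, ‖(B n : ℂ) * ζ ^ ((n : ℤ) - 3)‖
        = |B n| * ((7/10) ^ n * (10/7) ^ 3) := by
      intro n
      rw [norm_mul, norm_zpow, hζ, Complex.norm_real, Real.norm_eq_abs,
        show (7/10 : ℝ) ^ ((n : ℤ) - 3) = _ from hzpow n 3]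
    refine exists_hasSum_norm_le _ (11/10 * (10/7) ^ 3) 0 _ (fun n hn => ?_) ?_
    · have hXn := hB n
      rw [hnorm]
      calc _ ≤ (11/10 * (5/7) ^ n) * ((7/10) ^ n * (10/7) ^ 3) := by gcongr
        _ = (11/10 * (10/7) ^ 3 + 0 * (n : ℝ)) * (1/2 : ℝ) ^ n := by
          rw [← hpow]
          ring
    · simp only [hnorm, Finset.sum_range_succ, Finset.sum_range_zero, hB0, hB1, hB2, hB3, hB4,
        hB5, hB6, hB7, hB8, hB9, hB10]
      norm_num [abs_div]
  obtain ⟨d₁, hd₁, hd₁'⟩ :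
      ∃ g : ℂ, HasSum (fun n : ℕ => ((n : ℂ) + 4) * (A n : ℂ) * ζ ^ (n + 3)) g ∧ ‖g‖ ≤ 1.48 := by
    have hnorm : ∀ n : ℕ, ‖((n : ℂ) + 4) * (A n : ℂ) * ζ ^ (n + 3)‖
        = ((n : ℝ) + 4) * |A n| * ((7/10) ^ n * (7/10) ^ 3) := by
      intro n
      have hn : ‖(n : ℂ) + 4‖ = (n : ℝ) + 4 := by
        exact_mod_cast Complex.norm_natCast (n + 4)
      rw [norm_mul, norm_mul, norm_pow, hζ, Complex.norm_real, Real.norm_eq_abs, pow_add, hn]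
    refine exists_hasSum_norm_le _ (4 * (11/10 * (7/10) ^ 3)) (11/10 * (7/10) ^ 3) _
      (fun n hn => ?_) ?_
    · have hXn := hA n
      rw [hnorm]
      calc _ ≤ ((n : ℝ) + 4) * (11/10 * (5/7) ^ n) * ((7/10) ^ n * (7/10) ^ 3) := by gcongr
        _ = (4 * (11/10 * (7/10) ^ 3) + 11/10 * (7/10) ^ 3 * (n : ℝ)) * (1/2 : ℝ) ^ n := by
          rw [← hpow]
          ring
    · simp only [hnorm, Finset.sum_range_succ, Finset.sum_range_zero, hA0, hA1, hA2, hA3, hA4,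
        hA5, hA6, hA7, hA8, hA9, hA10]
      norm_num [abs_div]
  obtain ⟨d₂, hd₂, hd₂'⟩ :
      ∃ g : ℂ, HasSum (fun n : ℕ => ((n : ℂ) - 3) * (B n : ℂ) * ζ ^ ((n : ℤ) - 4)) g ∧
        ‖g‖ ≤ 13.7 := by
    have hnorm : ∀ n : ℕ, ‖((n : ℂ) - 3) * (B n : ℂ) * ζ ^ ((n : ℤ) - 4)‖
        = |(n : ℝ) - 3| * |B n| * ((7/10) ^ n * (10/7) ^ 4) := by
      intro n
      have hn : ‖(n : ℂ) - 3‖ = |(n : ℝ) - 3| := by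
        rw [← Real.norm_eq_abs, ← Complex.norm_real]
        norm_num
      rw [norm_mul, norm_mul, norm_zpow, hζ, Complex.norm_real, Real.norm_eq_abs, hn,
        show (7/10 : ℝ) ^ ((n : ℤ) - 4) = _ from hzpow n 4]
    refine exists_hasSum_norm_le _ 0 (11/10 * (10/7) ^ 4) _ (fun n hn => ?_) ?_
    · have hXn := hB n
      have hn' : (11 : ℝ) ≤ n := by exact_mod_cast hn
      have habs : |(n : ℝ) - 3| ≤ n := by
        rw [abs_of_nonneg (by linarith)]
        linarith
      rw [hnorm]
      calc _ ≤ (n : ℝ) * (11/10 * (5/7) ^ n) * ((7/10) ^ n * (10/7) ^ 4) := by gcongr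
        _ = (0 + 11/10 * (10/7) ^ 4 * (n : ℝ)) * (1/2 : ℝ) ^ n := by
          rw [← hpow]
          ring
    · simp only [hnorm, Finset.sum_range_succ, Finset.sum_range_zero, hB0, hB1, hB2, hB3, hB4,
        hB5, hB6, hB7, hB8, hB9, hB10]
      norm_num [abs_div]
  exact ⟨g₁, g₂, d₁, d₂, hg₁, hg₂, hd₁, hd₂, hg₁', hg₂', hd₁', hd₂'⟩
end

section
/- The functions G_1(ζ) = Σ_{n=0}^∞ A_n ζ^{n+4} and G_2(ζ) = Σ_{n=0}^∞ B_n ζ^{n-3} are well defined and holomorphic on the punctured disc {ζ ∈ ℂ : 0 < |ζ| ≤ 7/10}, each satisfies the linear equation G''(ζ) + 12·Y_0(ζ)·G(ζ) = 0 there, and their Wronskian G_1(ζ)G_2'(ζ) - G_2(ζ)G_1'(ζ) is identically equal to -7. -/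
/-!
Write `G₁ = ζ⁴ f` and `G₂ = ζ⁻³ g` with `f = Σ Aₙ ζⁿ`, `g = Σ Bₙ ζⁿ`.  Since
`(n + 4)(n + 3) - 12 = n(n + 7)` and `(n - 3)(n - 4) - 12 = n(n - 7)`, the two recurrences are the
coefficient form of `ζ f'' + 8 f' + 12 ζ³ P f = 0` and `ζ g'' - 6 g' + 12 ζ³ P g = 0`, which are
in turn `G'' + 12 Y₀ G = 0` for `G₁` and `G₂`.  The second recurrence is not imposed at the
resonant index `n = 7`; there it reads `0 = -12 (a₃ B₀ + a₂ B₁ + a₁ B₂ + a₀ B₃)`, which holds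
because `a₃ = B₁ = B₂ = B₃ = 0`.

Convergence: `P` is a polynomial, so in the recurrence the factor `n(n ± 7)` eventually dominates
`12 Σ |aₖ|`; hence the coefficients are bounded (`bounded_of_recurrence`) and both series converge
in the unit disc, where they can be differentiated termwise (`hasDerivAt_powSum`).

Wronskian: `G₁ G₂' - G₂ G₁' = -7 f g + ζ (f g' - f' g)`.  The right side is holomorphic on the
whole unit disc, its derivative vanishes by the two equations for `f` and `g`, and its value at `0`
is `-7 A₀ B₀ = -7`.
-/

/-! ### Power series in the unit disc -/

lemma hasSum_of_eq {F G : ℕ → ℂ} {s : ℂ} (h : ∀ n, F n = G n) (hF : HasSum F s) : HasSum G s :=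
  funext h ▸ hF

/-- The sum of the power series with coefficients `c`, with junk value `0` where it diverges. -/
noncomputable def powSum (c : ℕ → ℂ) (z : ℂ) : ℂ := ∑' n, c n * z ^ n

/-- The coefficients of the formal derivative of `∑ c n * z ^ n`. -/
def derivCoeff (c : ℕ → ℂ) (n : ℕ) : ℂ := (n + 1) * c (n + 1)

/-- At most polynomial growth: a condition that is stable under `derivCoeff` and makes the power
series converge in the unit disc. -/
def PolyGrowth (c : ℕ → ℂ) : Prop := ∃ (C : ℝ) (k : ℕ), ∀ n : ℕ, ‖c n‖ ≤ C * ((n : ℝ) + 1) ^ k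

lemma PolyGrowth.derivCoeff {c : ℕ → ℂ} (hc : PolyGrowth c) : PolyGrowth (derivCoeff c) := by
  obtain ⟨C, k, h⟩ := hc
  have hC : 0 ≤ C := by simpa using (norm_nonneg _).trans (h 0)
  refine ⟨C * 2 ^ k, k + 1, fun n => ?_⟩
  have h1 : ‖((n : ℂ) + 1)‖ = (n : ℝ) + 1 := by
    have := Complex.norm_natCast (n + 1)
    push_cast at this
    exact this
  have h2 : (((n + 1 : ℕ) : ℝ) + 1) ^ k ≤ 2 ^ k * ((n : ℝ) + 1) ^ k := by
    rw [← mul_pow]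
    push_cast
    gcongr
    have : (0 : ℝ) ≤ n := n.cast_nonneg
    linarith
  calc ‖_root_.derivCoeff c n‖ = ((n : ℝ) + 1) * ‖c (n + 1)‖ := by
        rw [_root_.derivCoeff, norm_mul, h1]
    _ ≤ ((n : ℝ) + 1) * (C * (2 ^ k * ((n : ℝ) + 1) ^ k)) := by
        gcongr
        exact (h (n + 1)).trans (by gcongr)
    _ = C * 2 ^ k * ((n : ℝ) + 1) ^ (k + 1) := by ring

lemma PolyGrowth.summable_norm {c : ℕ → ℂ} (hc : PolyGrowth c) {r : ℝ} (hr0 : 0 < r)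
    (hr : r < 1) : Summable fun n => ‖c n‖ * r ^ n := by
  obtain ⟨C, k, h⟩ := hc
  have h1 : Summable fun n : ℕ => ((n : ℝ)) ^ k * r ^ n :=
    summable_pow_mul_geometric_of_norm_lt_one k (by rwa [Real.norm_of_nonneg hr0.le])
  have h2 : Summable fun n : ℕ => (C / r) * ((((n + 1 : ℕ) : ℝ)) ^ k * r ^ (n + 1)) :=
    ((summable_nat_add_iff 1).2 h1).mul_left _
  refine Summable.of_nonneg_of_le (fun n => by positivity) (fun n => ?_) h2
  calc ‖c n‖ * r ^ n ≤ C * ((n : ℝ) + 1) ^ k * r ^ n := by gcongr; exact h n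
    _ = _ := by push_cast; field_simp; ring

lemma PolyGrowth.hasSum {c : ℕ → ℂ} (hc : PolyGrowth c) {z : ℂ} (hz : ‖z‖ < 1) :
    HasSum (fun n => c n * z ^ n) (powSum c z) := by
  obtain ⟨r, hr, hr1⟩ := exists_between hz
  refine (Summable.of_norm_bounded
    (hc.summable_norm ((norm_nonneg z).trans_lt hr) hr1) fun n => ?_).hasSum
  rw [norm_mul, norm_pow]
  gcongr

lemma hasDerivAt_powSum {c : ℕ → ℂ} (hc : PolyGrowth c) {z : ℂ} (hz : ‖z‖ < 1) :
    HasDerivAt (powSum c) (powSum (derivCoeff c) z) z := by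
  obtain ⟨r, hr, hr1⟩ := exists_between hz
  have hr0 : 0 < r := (norm_nonneg z).trans_lt hr
  have hzr : z ∈ Metric.ball (0 : ℂ) r := by simpa using hr
  have hu := hc.summable_norm hr0 hr1
  have hF : ∀ n : ℕ, DifferentiableOn ℂ (fun w : ℂ => c n * w ^ n) (Metric.ball 0 r) :=
    fun n => by fun_prop
  have hle : ∀ (n : ℕ) (w : ℂ), w ∈ Metric.ball (0 : ℂ) r → ‖c n * w ^ n‖ ≤ ‖c n‖ * r ^ n := by
    intro n w hw
    rw [norm_mul, norm_pow]
    have : ‖w‖ ≤ r := by simpa using (Metric.mem_ball.1 hw).le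
    gcongr
  have hd : DifferentiableAt ℂ (powSum c) z :=
    (Complex.differentiableOn_tsum_of_summable_norm hu hF Metric.isOpen_ball hle).differentiableAt
      (Metric.isOpen_ball.mem_nhds hzr)
  have hs := Complex.hasSum_deriv_of_summable_norm hu hF Metric.isOpen_ball hle hzr
  have hs' := (hasSum_nat_add_iff' 1).2 hs
  have key : deriv (powSum c) z = powSum (derivCoeff c) z := by
    refine HasSum.unique ?_ (hc.derivCoeff.hasSum hz)
    have h0 : deriv (powSum c) z
        - ∑ i ∈ Finset.range 1, deriv (fun w => c i * w ^ i) z = deriv (powSum c) z := by simp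
    rw [← h0]
    refine hasSum_of_eq (fun n => ?_) hs'
    rw [(((hasDerivAt_pow (n + 1) z).const_mul (c (n + 1)))).deriv, derivCoeff]
    push_cast
    ring
  exact key ▸ hd.hasDerivAt

/-- Multiplication of a power series by `z ^ j` shifts its coefficients. -/
lemma hasSum_shift {c : ℕ → ℂ} (hc : PolyGrowth c) {z : ℂ} (hz : ‖z‖ < 1) (j : ℕ) :
    HasSum (fun m => if j ≤ m then c (m - j) * z ^ m else 0) (z ^ j * powSum c z) := by
  rw [← hasSum_nat_add_iff' j]
  have h0 : ∑ i ∈ Finset.range j, (if j ≤ i then c (i - j) * z ^ i else 0) = 0 :=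
    Finset.sum_eq_zero fun i hi => if_neg (by have := Finset.mem_range.1 hi; omega)
  rw [h0, sub_zero]
  refine hasSum_of_eq (fun n => ?_) ((hc.hasSum hz).mul_left (z ^ j))
  rw [if_pos (Nat.le_add_left j n), Nat.add_sub_cancel, pow_add]
  ring

/-! ### The recurrence and the differential equation -/

/-- Coefficient form, at `z ^ m` with `m = n - 1`, of `z f'' + p f' + 12 z³ P f = 0` where
`P = ∑ a k z ^ k` has degree at most `17`. -/
def Recurrence (a : ℕ → ℝ) (p : ℝ) (c : ℕ → ℝ) : Prop :=
  ∀ m : ℕ, ((m : ℝ) + 1) * (m + p) * c (m + 1) =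
    -12 * ∑ k ∈ Finset.range 18, if k + 3 ≤ m then a k * c (m - (k + 3)) else 0

/-- Once `m + p ≥ 12 ∑ |a k| + 1`, the recurrence bounds `|c (m + 1)|` by the maximum of the
earlier `|c i|`, so the whole sequence is bounded by its initial segment. -/
lemma bounded_of_recurrence {a : ℕ → ℝ} {p : ℝ} {c : ℕ → ℝ} (h : Recurrence a p c) :
    ∃ C : ℝ, ∀ n, |c n| ≤ C := by
  set M : ℝ := ∑ k ∈ Finset.range 18, |a k| with hM
  have hM0 : 0 ≤ M := Finset.sum_nonneg fun _ _ => abs_nonneg _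
  obtain ⟨N, hN⟩ := exists_nat_ge (12 * M + 1 + |p|)
  refine ⟨∑ i ∈ Finset.range (N + 1), |c i|, fun n => ?_⟩
  set C : ℝ := ∑ i ∈ Finset.range (N + 1), |c i| with hC
  have hC0 : 0 ≤ C := Finset.sum_nonneg fun _ _ => abs_nonneg _
  induction n using Nat.strong_induction_on with
  | _ n ih =>
    rcases lt_or_ge n (N + 1) with hn | hn
    · exact Finset.single_le_sum (f := fun i => |c i|) (fun _ _ => abs_nonneg _)
        (Finset.mem_range.2 hn)
    · obtain ⟨m, rfl⟩ : ∃ m, n = m + 1 := ⟨n - 1, by omega⟩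
      have hmN : (N : ℝ) ≤ m := by exact_mod_cast (by omega : N ≤ m)
      have hp := neg_abs_le p
      have hx : 12 * M + 1 ≤ (m : ℝ) + p := by linarith
      have hm0 : (0 : ℝ) ≤ m := m.cast_nonneg
      have hfac : 12 * M + 1 ≤ ((m : ℝ) + 1) * (m + p) := by nlinarith
      have hsum : |∑ k ∈ Finset.range 18, if k + 3 ≤ m then a k * c (m - (k + 3)) else 0|
          ≤ M * C := by
        rw [hM, Finset.sum_mul]
        refine (Finset.abs_sum_le_sum_abs _ _).trans (Finset.sum_le_sum fun k _ => ?_)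
        split_ifs with hk
        · rw [abs_mul]
          gcongr
          exact ih _ (by omega)
        · rw [abs_zero]
          positivity
      have h1 : ((m : ℝ) + 1) * (m + p) * |c (m + 1)| ≤ 12 * (M * C) := by
        have := congrArg abs (h m)
        rw [abs_mul, abs_of_nonneg (by linarith : 0 ≤ ((m : ℝ) + 1) * (m + p)), abs_mul] at this
        rw [this]
        norm_num
        linarith
      by_contra! hlt
      nlinarith [mul_le_mul_of_nonneg_right hfac (abs_nonneg (c (m + 1)))]

lemma Recurrence.polyGrowth {a : ℕ → ℝ} {p : ℝ} {c : ℕ → ℝ} (h : Recurrence a p c) :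
    PolyGrowth fun n => (c n : ℂ) := by
  obtain ⟨C, hC⟩ := bounded_of_recurrence h
  exact ⟨C, 0, fun n => by simpa using hC n⟩

lemma Recurrence.ode {a : ℕ → ℝ} {p : ℝ} {c : ℕ → ℝ} (h : Recurrence a p c) {z : ℂ}
    (hz : ‖z‖ < 1) :
    z * powSum (derivCoeff (derivCoeff fun n => (c n : ℂ))) z
      + p * powSum (derivCoeff fun n => (c n : ℂ)) z
      + 12 * z ^ 3 * (∑ k ∈ Finset.range 18, (a k : ℂ) * z ^ k) * powSum (fun n => (c n : ℂ)) z
      = 0 := by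
  have hc := h.polyGrowth
  have s1 := hasSum_shift hc.derivCoeff.derivCoeff hz 1
  have s2 := (hc.derivCoeff.hasSum hz).mul_left (p : ℂ)
  have s3 := (hasSum_sum fun k (_ : k ∈ Finset.range 18) =>
    (hasSum_shift hc hz (k + 3)).mul_left (a k : ℂ)).mul_left (12 : ℂ)
  have s := (s1.add s2).add s3
  have hzero : HasSum (fun _ : ℕ => (0 : ℂ)) 0 := hasSum_zero
  refine Eq.trans ?_ (HasSum.unique s ?_)
  · rw [pow_one, Finset.mul_sum, Finset.sum_mul, Finset.mul_sum]
    congr 1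
    exact Finset.sum_congr rfl fun k _ => by ring
  · refine hasSum_of_eq (fun m => Eq.symm ?_) hzero
    have hm := congrArg (fun x : ℝ => (x : ℂ)) (h m)
    push_cast at hm
    have e1 : (if 1 ≤ m then derivCoeff (derivCoeff fun n => (c n : ℂ)) (m - 1) * z ^ m else 0)
        = m * (m + 1) * c (m + 1) * z ^ m := by
      rcases m with _ | m
      · simp
      · rw [if_pos (by omega), Nat.add_sub_cancel, derivCoeff, derivCoeff]
        push_cast
        ring
    have e3 : ∑ k ∈ Finset.range 18,
          (a k : ℂ) * (if k + 3 ≤ m then (c (m - (k + 3)) : ℂ) * z ^ m else 0)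
        = (∑ k ∈ Finset.range 18, if k + 3 ≤ m then (a k : ℂ) * c (m - (k + 3)) else 0)
          * z ^ m := by
      rw [Finset.sum_mul]
      refine Finset.sum_congr rfl fun k _ => ?_
      split_ifs <;> ring
    have hm' : ((m : ℂ) + 1) * (m + p) * c (m + 1) = -12 * ∑ k ∈ Finset.range 18,
        if k + 3 ≤ m then (a k : ℂ) * c (m - (k + 3)) else 0 := by
      rw [hm]
      congr 1
      refine Finset.sum_congr rfl fun k _ => ?_
      split_ifs <;> push_cast <;> rfl
    rw [e1, e3, derivCoeff]
    linear_combination z ^ m * hm'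

/-- Truncating the convolution at `min (n - 4) 17` is the same as summing over all `k ≤ 17` with
`k + 4 ≤ n`; here `n = m + 1`. -/
lemma sum_range_min (u : ℕ → ℝ) (v : ℕ → ℝ) {m : ℕ} (hm : 3 ≤ m) :
    ∑ k ∈ Finset.range (min (m + 1 - 4) 17 + 1), u k * v (m + 1 - 4 - k)
      = ∑ k ∈ Finset.range 18, if k + 3 ≤ m then u k * v (m - (k + 3)) else 0 := by
  rw [← Finset.sum_filter]
  refine Finset.sum_congr ?_ fun k hk => ?_
  · ext k
    simp only [Finset.mem_range, Finset.mem_filter]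
    omega
  · congr 2
    omega

/-- If `c 1 = c 2 = c 3 = 0`, only the indices `n = m + 1 ≥ 4` of the recurrence matter. -/
lemma recurrence_of_ge {a : ℕ → ℝ} {p : ℝ} {c : ℕ → ℝ} (c1 : c 1 = 0) (c2 : c 2 = 0)
    (c3 : c 3 = 0)
    (h : ∀ m : ℕ, 3 ≤ m → ((m : ℝ) + 1) * (m + p) * c (m + 1) =
      -12 * ∑ k ∈ Finset.range (min (m + 1 - 4) 17 + 1), a k * c (m + 1 - 4 - k)) :
    Recurrence a p c := by
  intro m
  rcases lt_or_ge m 3 with hm | hm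
  · have hs : ∑ k ∈ Finset.range 18, (if k + 3 ≤ m then a k * c (m - (k + 3)) else 0) = 0 :=
      Finset.sum_eq_zero fun k _ => if_neg (by omega)
    rw [hs]
    interval_cases m <;> simp [c1, c2, c3]
  · rw [h m hm, sum_range_min a c hm]

/-! ### The Wronskian -/

/-- The function `-7 f g + z (f g' - f' g)`, which is the Wronskian of `z⁴ f` and `z⁻³ g`, is
constant on the unit disc. -/
lemma reduced_wronskian {f f' f'' g g' g'' Q : ℂ → ℂ}
    (hf : ∀ z, ‖z‖ < 1 → HasDerivAt f (f' z) z) (hf' : ∀ z, ‖z‖ < 1 → HasDerivAt f' (f'' z) z)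
    (hg : ∀ z, ‖z‖ < 1 → HasDerivAt g (g' z) z) (hg' : ∀ z, ‖z‖ < 1 → HasDerivAt g' (g'' z) z)
    (ef : ∀ z, ‖z‖ < 1 → z * f'' z + 8 * f' z + Q z * f z = 0)
    (eg : ∀ z, ‖z‖ < 1 → z * g'' z - 6 * g' z + Q z * g z = 0) {z : ℂ} (hz : ‖z‖ < 1) :
    -7 * (f z * g z) + z * (f z * g' z - f' z * g z) = -7 * (f 0 * g 0) := by
  set W : ℂ → ℂ := fun z => -7 * (f z * g z) + z * (f z * g' z - f' z * g z) with hW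
  have hd : ∀ w, ‖w‖ < 1 → HasDerivAt W 0 w := by
    intro w hw
    have h := (((hf w hw).mul (hg w hw)).const_mul (-7)).add ((hasDerivAt_id w).mul
      (((hf w hw).mul (hg' w hw)).sub ((hf' w hw).mul (hg w hw))))
    refine h.congr_deriv ?_
    simp only [Pi.mul_apply, Pi.sub_apply, id]
    linear_combination f w * eg w hw - g w * ef w hw
  have hconst : W z = W 0 := by
    refine Metric.isOpen_ball.is_const_of_deriv_eq_zero (𝕜 := ℂ) (s := Metric.ball (0 : ℂ) 1)
      (convex_ball _ _).isPreconnected (fun w hw => ?_) (fun w hw => ?_) (by simpa using hz)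
      (by simp)
    · exact (hd w (by simpa using hw)).differentiableAt.differentiableWithinAt
    · exact (hd w (by simpa using hw)).deriv
  simpa [hW] using hconst


/-- The sums `G₁(ζ) = Σ A_n ζ^{n+4}` and `G₂(ζ) = Σ B_n ζ^{n-3}` define
holomorphic functions on the punctured disc `0 < |ζ| ≤ 7/10`, both satisfy
`G'' + 12 Y₀ G = 0` there (where `Y₀(ζ) = -1/ζ² + ζ² P(ζ)`, `P(ζ) = Σ_{n=0}^{17} a_n ζⁿ`),
and their Wronskian `G₁ G₂' - G₂ G₁'` is identically `-7`. -/
theorem statement6 (x₀ : ℝ) (hx₀ : x₀ = -770766/323285) (a A B : ℕ → ℝ)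
    (h0 : a 0 = -x₀ / 10) (h1 : a 1 = -1/6) (h2 : a 2 = 19949/321055) (h3 : a 3 = 0)
    (hrec : ∀ n, 4 ≤ n → n ≤ 17 →
      a n = -(6 / (((n : ℝ) + 5) * ((n : ℝ) - 2))) *
        ∑ k ∈ Finset.range (n - 4 + 1), a k * a (n - 4 - k))
    (hA0 : A 0 = 1) (hA1 : A 1 = 0) (hA2 : A 2 = 0) (hA3 : A 3 = 0)
    (hArec : ∀ n, 4 ≤ n →
      A n = -(12 / ((n : ℝ) * ((n : ℝ) + 7))) *
        ∑ k ∈ Finset.range (min (n - 4) 17 + 1), a k * A (n - 4 - k))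
    (hB0 : B 0 = 1) (hB1 : B 1 = 0) (hB2 : B 2 = 0) (hB3 : B 3 = 0) (hB7 : B 7 = 0)
    (hBrec : ∀ n, 4 ≤ n → n ≠ 7 →
      B n = -(12 / ((n : ℝ) * ((n : ℝ) - 7))) *
        ∑ k ∈ Finset.range (min (n - 4) 17 + 1), a k * B (n - 4 - k))
    (Y₀ : ℂ → ℂ)
    (hY₀ : ∀ ζ : ℂ, Y₀ ζ = -1 / ζ ^ 2 + ζ ^ 2 * ∑ n ∈ Finset.range 18, (a n : ℂ) * ζ ^ n) :
    ∃ G₁ G₂ : ℂ → ℂ, ∀ ζ : ℂ, 0 < ‖ζ‖ → ‖ζ‖ ≤ 7/10 →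
      HasSum (fun n : ℕ => (A n : ℂ) * ζ ^ (n + 4)) (G₁ ζ) ∧
      HasSum (fun n : ℕ => (B n : ℂ) * ζ ^ ((n : ℤ) - 3)) (G₂ ζ) ∧
      DifferentiableAt ℂ G₁ ζ ∧ DifferentiableAt ℂ G₂ ζ ∧
      DifferentiableAt ℂ (deriv G₁) ζ ∧ DifferentiableAt ℂ (deriv G₂) ζ ∧
      deriv (deriv G₁) ζ + 12 * Y₀ ζ * G₁ ζ = 0 ∧
      deriv (deriv G₂) ζ + 12 * Y₀ ζ * G₂ ζ = 0 ∧
      G₁ ζ * deriv G₂ ζ - G₂ ζ * deriv G₁ ζ = -7 := by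
  have hRA : Recurrence a 8 A := recurrence_of_ge hA1 hA2 hA3 fun m hm => by
    rw [hArec (m + 1) (by omega)]
    have hm0 : (0 : ℝ) ≤ m := m.cast_nonneg
    have : (m : ℝ) + 1 ≠ 0 := by positivity
    have : (m : ℝ) + 1 + 7 ≠ 0 := by positivity
    push_cast
    field_simp
    ring
  have hRB : Recurrence a (-6) B := recurrence_of_ge hB1 hB2 hB3 fun m hm => by
    by_cases h6 : m = 6
    -- The resonant index: both sides vanish, the right one because `a 3 = 0`.
    · subst h6
      norm_num [Finset.sum_range_succ, hB1, hB2, hB3, h3]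
    · rw [hBrec (m + 1) (by omega) (by omega)]
      have hm0 : (0 : ℝ) ≤ m := m.cast_nonneg
      have : (m : ℝ) + 1 ≠ 0 := by positivity
      have h7 : (m : ℝ) + 1 - 7 ≠ 0 := by
        intro h
        apply h6
        have : (m : ℝ) = 6 := by linarith
        exact_mod_cast this
      push_cast
      field_simp
      ring
  have hcA := hRA.polyGrowth
  have hcB := hRB.polyGrowth
  set cA : ℕ → ℂ := fun n => (A n : ℂ) with hcA_def
  set cB : ℕ → ℂ := fun n => (B n : ℂ) with hcB_def
  set f := powSum cA with hf_def
  set g := powSum cB with hg_def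
  set f' := powSum (derivCoeff cA) with hf'_def
  set g' := powSum (derivCoeff cB) with hg'_def
  set f'' := powSum (derivCoeff (derivCoeff cA)) with hf''_def
  set g'' := powSum (derivCoeff (derivCoeff cB)) with hg''_def
  have df : ∀ z, ‖z‖ < 1 → HasDerivAt f (f' z) z := fun z hz => hasDerivAt_powSum hcA hz
  have df' : ∀ z, ‖z‖ < 1 → HasDerivAt f' (f'' z) z :=
    fun z hz => hasDerivAt_powSum hcA.derivCoeff hz
  have dg : ∀ z, ‖z‖ < 1 → HasDerivAt g (g' z) z := fun z hz => hasDerivAt_powSum hcB hz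
  have dg' : ∀ z, ‖z‖ < 1 → HasDerivAt g' (g'' z) z :=
    fun z hz => hasDerivAt_powSum hcB.derivCoeff hz
  set P : ℂ → ℂ := fun z => ∑ k ∈ Finset.range 18, (a k : ℂ) * z ^ k with hP
  have ef : ∀ z, ‖z‖ < 1 → z * f'' z + 8 * f' z + 12 * z ^ 3 * P z * f z = 0 :=
    fun z hz => by simpa using hRA.ode hz
  have eg : ∀ z, ‖z‖ < 1 → z * g'' z - 6 * g' z + 12 * z ^ 3 * P z * g z = 0 :=
    fun z hz => by simpa [sub_eq_add_neg] using hRB.ode hz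
  have hf0 : f 0 = 1 := by
    rw [hf_def, powSum, tsum_eq_single 0 (fun n hn => by simp [hn])]
    simp [hcA_def, hA0]
  have hg0 : g 0 = 1 := by
    rw [hg_def, powSum, tsum_eq_single 0 (fun n hn => by simp [hn])]
    simp [hcB_def, hB0]
  have hW : ∀ z, ‖z‖ < 1 → -7 * (f z * g z) + z * (f z * g' z - f' z * g z) = -7 := by
    intro z hz
    rw [reduced_wronskian (Q := fun z => 12 * z ^ 3 * P z) df df' dg dg' ef eg hz, hf0, hg0]
    norm_num
  have D1 : ∀ z : ℂ, ‖z‖ < 1 →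
      HasDerivAt (fun w => w ^ 4 * f w) (4 * z ^ 3 * f z + z ^ 4 * f' z) z := by
    intro z hz
    refine ((hasDerivAt_pow 4 z).mul (df z hz)).congr_deriv ?_
    norm_num
  have D1' : ∀ z : ℂ, ‖z‖ < 1 →
      HasDerivAt (fun w => 4 * w ^ 3 * f w + w ^ 4 * f' w)
        (12 * z ^ 2 * f z + 8 * z ^ 3 * f' z + z ^ 4 * f'' z) z := by
    intro z hz
    refine ((((hasDerivAt_pow 3 z).const_mul 4).mul (df z hz)).add
      ((hasDerivAt_pow 4 z).mul (df' z hz))).congr_deriv ?_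
    norm_num
    ring
  have D2 : ∀ z : ℂ, z ≠ 0 → ‖z‖ < 1 →
      HasDerivAt (fun w => g w / w ^ 3) (-3 * g z / z ^ 4 + g' z / z ^ 3) z := by
    intro z hz0 hz
    refine ((dg z hz).div (hasDerivAt_pow 3 z) (pow_ne_zero 3 hz0)).congr_deriv ?_
    field_simp
    norm_num
    ring
  have D2' : ∀ z : ℂ, z ≠ 0 → ‖z‖ < 1 →
      HasDerivAt (fun w => -3 * g w / w ^ 4 + g' w / w ^ 3)
        (12 * g z / z ^ 5 - 6 * g' z / z ^ 4 + g'' z / z ^ 3) z := by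
    intro z hz0 hz
    refine ((((dg z hz).const_mul (-3)).div (hasDerivAt_pow 4 z) (pow_ne_zero 4 hz0)).add
      ((dg' z hz).div (hasDerivAt_pow 3 z) (pow_ne_zero 3 hz0))).congr_deriv ?_
    field_simp
    norm_num
    ring
  refine ⟨fun w => w ^ 4 * f w, fun w => g w / w ^ 3, fun z hz0 hz7 => ?_⟩
  have hz : ‖z‖ < 1 := by linarith
  have hne : z ≠ 0 := norm_pos_iff.1 hz0
  have hev : ∀ᶠ w in nhds z, w ≠ 0 ∧ ‖w‖ < 1 :=
    (isOpen_ne.eventually_mem hne).and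
      ((isOpen_lt continuous_norm continuous_const).eventually_mem hz)
  have E1 : deriv (fun w => w ^ 4 * f w) =ᶠ[nhds z] fun w => 4 * w ^ 3 * f w + w ^ 4 * f' w :=
    hev.mono fun w hw => (D1 w hw.2).deriv
  have E2 : deriv (fun w => g w / w ^ 3) =ᶠ[nhds z] fun w => -3 * g w / w ^ 4 + g' w / w ^ 3 :=
    hev.mono fun w hw => (D2 w hw.1 hw.2).deriv
  have F1 := (D1' z hz).congr_of_eventuallyEq E1
  have F2 := (D2' z hne hz).congr_of_eventuallyEq E2
  refine ⟨?_, ?_, (D1 z hz).differentiableAt, (D2 z hne hz).differentiableAt,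
    F1.differentiableAt, F2.differentiableAt, ?_, ?_, ?_⟩
  · refine hasSum_of_eq (fun n => ?_) ((hcA.hasSum hz).mul_left (z ^ 4))
    simp only [hcA_def]
    ring
  · refine hasSum_of_eq (fun n => ?_) ((hcB.hasSum hz).div_const (z ^ 3))
    rw [zpow_sub₀ hne, zpow_natCast, mul_div_assoc]
    norm_cast
  · rw [F1.deriv, hY₀]
    have hY : ∑ n ∈ Finset.range 18, (a n : ℂ) * z ^ n = P z := rfl
    rw [hY]
    have := ef z hz
    field_simp
    linear_combination z ^ 3 * this
  · rw [F2.deriv, hY₀]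
    have hY : ∑ n ∈ Finset.range 18, (a n : ℂ) * z ^ n = P z := rfl
    rw [hY]
    have := eg z hz
    field_simp
    linear_combination z * this
  · rw [(D1 z hz).deriv, (D2 z hne hz).deriv, ← hW z hz]
    field_simp
    ring
end

section
/- Let R(ζ) = Y_0''(ζ) + 6·Y_0(ζ)² - (x_0 + ζ). Then R(ζ) is a polynomial in ζ whose only nonzero monomials have degrees between 18 and 38, and sup_{|ζ| = 7/10} |R(ζ)| ≤ 1.311×10^{-6}. -/
/-!
Write `Y₀ = -ζ⁻² + ∑ aₙ ζⁿ⁺²` and `P = ∑ aₙ ζⁿ`. The poles `∓6 ζ⁻⁴` of `Y₀''` and `6 Y₀²` cancel, and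
`R = ∑ (n + 5)(n - 2) aₙ ζⁿ + 6 ζ⁴ P² - x₀ - ζ`, because `(n + 2)(n + 1) - 12 = (n + 5)(n - 2)`.
The values of `a₀`, `a₁`, `a₃`, the factor `n - 2` for `n = 2` and the recursion for `4 ≤ n ≤ 17` kill
all coefficients of degree at most `17`, so that `R = ∑ qⱼ ζ¹⁸⁺ʲ` over `0 ≤ j ≤ 20`, where `qⱼ` is `6` times the coefficient of `ζ¹⁴⁺ʲ` in `P²`.
On `|ζ| = 7/10` the triangle inequality suffices: the `qⱼ` are explicit rational numbers and
`∑ |qⱼ| (7/10)¹⁸⁺ʲ ≈ 1.3102 × 10⁻⁶`.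
-/

/-- The coefficient of `ζ ^ (18 + j)` in `6 ζ⁴ (∑_{n < 18} aₙ ζⁿ)²`. The conditions on `k` keep both
indices `k` and `14 + j - k` in `[0, 17]` (and rule out truncated subtraction). -/
def residualCoeff (a : ℕ → ℝ) (j : ℕ) : ℝ :=
  6 * ∑ k ∈ Finset.range 18, if k ≤ 14 + j ∧ 14 + j < 18 + k then a k * a (14 + j - k) else 0

/-- Second derivative of `-ζ⁻² + ζ² P(ζ)` away from the pole, with the derivative taken termwise. -/
lemma deriv_deriv_laurent (a : ℕ → ℝ) (Y : ℂ → ℂ)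
    (hY : ∀ ζ : ℂ, Y ζ = -1 / ζ ^ 2 + ζ ^ 2 * ∑ n ∈ Finset.range 18, (a n : ℂ) * ζ ^ n)
    (ζ : ℂ) (hζ : ζ ≠ 0) :
    deriv (deriv Y) ζ =
      -6 / ζ ^ 4 + ∑ n ∈ Finset.range 18, (a n : ℂ) * (((n : ℂ) + 2) * ((n : ℂ) + 1)) * ζ ^ n := by
  have hY' : Y = fun ζ => -(ζ ^ (-2 : ℤ)) + ∑ n ∈ Finset.range 18, (a n : ℂ) * ζ ^ (n + 2) := by
    funext z
    rw [hY, Finset.mul_sum, zpow_neg, neg_div, one_div]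
    congr 1
    exact Finset.sum_congr rfl fun n _ => by ring
  have key : ∀ z : ℂ, z ≠ 0 → deriv Y z =
      2 * z ^ (-3 : ℤ) + ∑ n ∈ Finset.range 18, (a n : ℂ) * ((n : ℂ) + 2) * z ^ (n + 1) := by
    intro z hz
    rw [hY']
    have h1 : HasDerivAt (fun ζ : ℂ => -(ζ ^ (-2 : ℤ))) (2 * z ^ (-3 : ℤ)) z := by
      refine HasDerivAt.congr_deriv ((hasDerivAt_zpow (-2) z (Or.inl hz)).fun_neg) ?_
      norm_num
    have h2 : HasDerivAt (fun ζ : ℂ => ∑ n ∈ Finset.range 18, (a n : ℂ) * ζ ^ (n + 2))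
        (∑ n ∈ Finset.range 18, (a n : ℂ) * ((n : ℂ) + 2) * z ^ (n + 1)) z := by
      refine HasDerivAt.fun_sum fun n _ => ?_
      refine HasDerivAt.congr_deriv ((hasDerivAt_pow (n + 2) z).const_mul (a n : ℂ)) ?_
      push_cast
      rw [mul_assoc]
    exact (h1.add h2).deriv
  have hev : deriv Y =ᶠ[nhds ζ] fun z =>
      2 * z ^ (-3 : ℤ) + ∑ n ∈ Finset.range 18, (a n : ℂ) * ((n : ℂ) + 2) * z ^ (n + 1) :=
    (isOpen_ne.eventually_mem hζ).mono key
  rw [hev.deriv_eq]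
  have h1 : HasDerivAt (fun z : ℂ => 2 * z ^ (-3 : ℤ)) (-6 / ζ ^ 4) ζ := by
    refine HasDerivAt.congr_deriv ((hasDerivAt_zpow (-3) ζ (Or.inl hζ)).const_mul (2 : ℂ)) ?_
    have : ((-3 : ℤ) - 1) = -((4 : ℕ) : ℤ) := by norm_num
    rw [this, zpow_neg, zpow_natCast]
    push_cast
    ring
  have h2 : HasDerivAt (fun z : ℂ => ∑ n ∈ Finset.range 18, (a n : ℂ) * ((n : ℂ) + 2) * z ^ (n + 1))
      (∑ n ∈ Finset.range 18, (a n : ℂ) * (((n : ℂ) + 2) * ((n : ℂ) + 1)) * ζ ^ n) ζ := by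
    refine HasDerivAt.fun_sum fun n _ => ?_
    refine HasDerivAt.congr_deriv ((hasDerivAt_pow (n + 1) ζ).const_mul ((a n : ℂ) * ((n : ℂ) + 2))) ?_
    push_cast
    ring
  exact (h1.add h2).deriv

/-- The square of `P`, split at degree `14`: the lower coefficients are the convolutions which occur
in the recursion, the upper ones make up the residual. -/
lemma six_mul_sq_split (a : ℕ → ℝ) (ζ : ℂ) :
    6 * (∑ n ∈ Finset.range 18, (a n : ℂ) * ζ ^ n) ^ 2 =
      6 * ∑ m ∈ Finset.range 14, ((∑ k ∈ Finset.range (m + 1), a k * a (m - k) : ℝ) : ℂ) * ζ ^ m +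
      ∑ j ∈ Finset.range 21, (residualCoeff a j : ℂ) * ζ ^ (14 + j) := by
  simp only [residualCoeff, Finset.sum_range_succ, Finset.sum_range_zero]
  norm_num
  ring

/-- Cancellation of the coefficients of degree `4 ≤ n ≤ 17` by the recursion. -/
lemma recursion_sum (a : ℕ → ℝ)
    (hrec : ∀ n, 4 ≤ n → n ≤ 17 →
      a n = -(6 / (((n : ℝ) + 5) * ((n : ℝ) - 2))) *
        ∑ k ∈ Finset.range (n - 4 + 1), a k * a (n - 4 - k)) (ζ : ℂ) :
    6 * ∑ m ∈ Finset.range 14, ((∑ k ∈ Finset.range (m + 1), a k * a (m - k) : ℝ) : ℂ) * ζ ^ m =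
      -∑ m ∈ Finset.range 14, (a (m + 4) : ℂ) * (((m : ℂ) + 9) * ((m : ℂ) + 2)) * ζ ^ m := by
  rw [Finset.mul_sum, ← Finset.sum_neg_distrib]
  refine Finset.sum_congr rfl fun m hm => ?_
  have hm' := Finset.mem_range.mp hm
  have h := hrec (m + 4) (by omega) (by omega)
  rw [Nat.add_sub_cancel] at h
  have h' : 6 * ∑ k ∈ Finset.range (m + 1), a k * a (m - k) =
      -(a (m + 4) * (((m : ℝ) + 9) * ((m : ℝ) + 2))) := by
    rw [h]
    push_cast
    have e1 : (m : ℝ) + 4 + 5 ≠ 0 := by positivity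
    have e2 : (m : ℝ) + 4 - 2 ≠ 0 := by
      have : (0 : ℝ) ≤ m := Nat.cast_nonneg m
      linarith
    field_simp
    ring
  have h'' := congrArg (fun r : ℝ => (r : ℂ)) h'
  push_cast at h'' ⊢
  linear_combination ζ ^ m * h''

/-- The weighted `ℓ¹` norm of the residual coefficients at radius `7/10`. Each coefficient is
bounded by its absolute value rounded up to a multiple of `10⁻¹¹`. -/
lemma residual_bound (x₀ : ℝ) (hx₀ : x₀ = -770766/323285) (a : ℕ → ℝ)
    (h0 : a 0 = -x₀ / 10) (h1 : a 1 = -1/6) (h2 : a 2 = 19949/321055) (h3 : a 3 = 0)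
    (hrec : ∀ n, 4 ≤ n → n ≤ 17 →
      a n = -(6 / (((n : ℝ) + 5) * ((n : ℝ) - 2))) *
        ∑ k ∈ Finset.range (n - 4 + 1), a k * a (n - 4 - k)) :
    ∑ j ∈ Finset.range 21, |residualCoeff a j| * (7 / 10 : ℝ) ^ (18 + j) ≤ 1.311e-6 := by
  rw [hx₀] at h0
  norm_num at h0
  have h4 := hrec 4 (by norm_num) (by norm_num)
  norm_num [Finset.sum_range_succ, h0] at h4
  have h5 := hrec 5 (by norm_num) (by norm_num)
  norm_num [Finset.sum_range_succ, h0, h1] at h5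
  have h6 := hrec 6 (by norm_num) (by norm_num)
  norm_num [Finset.sum_range_succ, h0, h1, h2] at h6
  have h7 := hrec 7 (by norm_num) (by norm_num)
  norm_num [Finset.sum_range_succ, h0, h1, h2, h3] at h7
  have h8 := hrec 8 (by norm_num) (by norm_num)
  norm_num [Finset.sum_range_succ, h0, h1, h2, h3, h4] at h8
  have h9 := hrec 9 (by norm_num) (by norm_num)
  norm_num [Finset.sum_range_succ, h0, h1, h2, h3, h4, h5] at h9
  have h10 := hrec 10 (by norm_num) (by norm_num)
  norm_num [Finset.sum_range_succ, h0, h1, h2, h3, h4, h5, h6] at h10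
  have h11 := hrec 11 (by norm_num) (by norm_num)
  norm_num [Finset.sum_range_succ, h0, h1, h2, h3, h4, h5, h6, h7] at h11
  have h12 := hrec 12 (by norm_num) (by norm_num)
  norm_num [Finset.sum_range_succ, h0, h1, h2, h3, h4, h5, h6, h7, h8] at h12
  have h13 := hrec 13 (by norm_num) (by norm_num)
  norm_num [Finset.sum_range_succ, h0, h1, h2, h3, h4, h5, h6, h7, h8, h9] at h13
  have h14 := hrec 14 (by norm_num) (by norm_num)
  norm_num [Finset.sum_range_succ, h0, h1, h2, h3, h4, h5, h6, h7, h8, h9, h10] at h14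
  have h15 := hrec 15 (by norm_num) (by norm_num)
  norm_num [Finset.sum_range_succ, h0, h1, h2, h3, h4, h5, h6, h7, h8, h9, h10, h11] at h15
  have h16 := hrec 16 (by norm_num) (by norm_num)
  norm_num [Finset.sum_range_succ, h0, h1, h2, h3, h4, h5, h6, h7, h8, h9, h10, h11, h12] at h16
  have h17 := hrec 17 (by norm_num) (by norm_num)
  norm_num [Finset.sum_range_succ, h0, h1, h2, h3, h4, h5, h6, h7, h8, h9, h10, h11, h12, h13] at h17
  have b0 : |residualCoeff a 0| ≤ 41441061 / 10 ^ 11 := by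
    norm_num [abs_le, residualCoeff, Finset.sum_range_succ, h0, h1, h2, h3, h4, h5, h6, h7, h8, h9, h10, h11, h12, h13, h14]
  have b1 : |residualCoeff a 1| ≤ 38028507 / 10 ^ 11 := by
    norm_num [abs_le, residualCoeff, Finset.sum_range_succ, h0, h1, h2, h3, h4, h5, h6, h7, h8, h9, h10, h11, h12, h13, h14, h15]
  have b2 : |residualCoeff a 2| ≤ 19967609 / 10 ^ 11 := by
    norm_num [abs_le, residualCoeff, Finset.sum_range_succ, h0, h1, h2, h3, h4, h5, h6, h7, h8, h9, h10, h11, h12, h13, h14, h15, h16]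
  have b3 : |residualCoeff a 3| ≤ 5818967 / 10 ^ 11 := by
    norm_num [abs_le, residualCoeff, Finset.sum_range_succ, h0, h1, h2, h3, h4, h5, h6, h7, h8, h9, h10, h11, h12, h13, h14, h15, h16, h17]
  have b4 : |residualCoeff a 4| ≤ 475095 / 10 ^ 11 := by
    norm_num [abs_le, residualCoeff, Finset.sum_range_succ, h1, h2, h3, h4, h5, h6, h7, h8, h9, h10, h11, h12, h13, h14, h15, h16, h17]
  have b5 : |residualCoeff a 5| ≤ 1786988 / 10 ^ 11 := by
    norm_num [abs_le, residualCoeff, Finset.sum_range_succ, h2, h3, h4, h5, h6, h7, h8, h9, h10, h11, h12, h13, h14, h15, h16, h17]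
  have b6 : |residualCoeff a 6| ≤ 1254274 / 10 ^ 11 := by
    norm_num [abs_le, residualCoeff, Finset.sum_range_succ, h3, h4, h5, h6, h7, h8, h9, h10, h11, h12, h13, h14, h15, h16, h17]
  have b7 : |residualCoeff a 7| ≤ 535945 / 10 ^ 11 := by
    norm_num [abs_le, residualCoeff, Finset.sum_range_succ, h4, h5, h6, h7, h8, h9, h10, h11, h12, h13, h14, h15, h16, h17]
  have b8 : |residualCoeff a 8| ≤ 118740 / 10 ^ 11 := by
    norm_num [abs_le, residualCoeff, Finset.sum_range_succ, h5, h6, h7, h8, h9, h10, h11, h12, h13, h14, h15, h16, h17]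
  have b9 : |residualCoeff a 9| ≤ 29398 / 10 ^ 11 := by
    norm_num [abs_le, residualCoeff, Finset.sum_range_succ, h6, h7, h8, h9, h10, h11, h12, h13, h14, h15, h16, h17]
  have b10 : |residualCoeff a 10| ≤ 46513 / 10 ^ 11 := by
    norm_num [abs_le, residualCoeff, Finset.sum_range_succ, h7, h8, h9, h10, h11, h12, h13, h14, h15, h16, h17]
  have b11 : |residualCoeff a 11| ≤ 27243 / 10 ^ 11 := by
    norm_num [abs_le, residualCoeff, Finset.sum_range_succ, h8, h9, h10, h11, h12, h13, h14, h15, h16, h17]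
  have b12 : |residualCoeff a 12| ≤ 9919 / 10 ^ 11 := by
    norm_num [abs_le, residualCoeff, Finset.sum_range_succ, h9, h10, h11, h12, h13, h14, h15, h16, h17]
  have b13 : |residualCoeff a 13| ≤ 1618 / 10 ^ 11 := by
    norm_num [abs_le, residualCoeff, Finset.sum_range_succ, h10, h11, h12, h13, h14, h15, h16, h17]
  have b14 : |residualCoeff a 14| ≤ 744 / 10 ^ 11 := by
    norm_num [abs_le, residualCoeff, Finset.sum_range_succ, h11, h12, h13, h14, h15, h16, h17]
  have b15 : |residualCoeff a 15| ≤ 786 / 10 ^ 11 := by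
    norm_num [abs_le, residualCoeff, Finset.sum_range_succ, h12, h13, h14, h15, h16, h17]
  have b16 : |residualCoeff a 16| ≤ 390 / 10 ^ 11 := by
    norm_num [abs_le, residualCoeff, Finset.sum_range_succ, h13, h14, h15, h16, h17]
  have b17 : |residualCoeff a 17| ≤ 127 / 10 ^ 11 := by
    norm_num [abs_le, residualCoeff, Finset.sum_range_succ, h14, h15, h16, h17]
  have b18 : |residualCoeff a 18| ≤ 26 / 10 ^ 11 := by
    norm_num [abs_le, residualCoeff, Finset.sum_range_succ, h15, h16, h17]
  have b19 : |residualCoeff a 19| ≤ 3 / 10 ^ 11 := by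
    norm_num [abs_le, residualCoeff, Finset.sum_range_succ, h16, h17]
  have b20 : |residualCoeff a 20| ≤ 1 / 10 ^ 11 := by
    norm_num [abs_le, residualCoeff, Finset.sum_range_succ, h17]
  have hb : ∀ j (t : ℝ), |residualCoeff a j| ≤ t →
      |residualCoeff a j| * (7 / 10 : ℝ) ^ (18 + j) ≤ t * (7 / 10 : ℝ) ^ (18 + j) :=
    fun j t h => mul_le_mul_of_nonneg_right h (by positivity)
  simp only [Finset.sum_range_succ, Finset.sum_range_zero]
  linarith [
    hb _ _ b0, hb _ _ b1, hb _ _ b2, hb _ _ b3, hb _ _ b4, hb _ _ b5, hb _ _ b6,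
    hb _ _ b7, hb _ _ b8, hb _ _ b9, hb _ _ b10, hb _ _ b11, hb _ _ b12, hb _ _ b13,
    hb _ _ b14, hb _ _ b15, hb _ _ b16, hb _ _ b17, hb _ _ b18, hb _ _ b19, hb _ _ b20]

/-- With `Y₀(ζ) = -1/ζ² + ζ² P(ζ)` and
`R(ζ) = Y₀''(ζ) + 6 Y₀(ζ)² - (x₀ + ζ)`, the function `R` is (the restriction of) a
polynomial whose only nonzero monomials have degrees between 18 and 38, and
`sup_{|ζ|=7/10} |R(ζ)| ≤ 1.311 × 10⁻⁶`. -/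
theorem statement7 (x₀ : ℝ) (hx₀ : x₀ = -770766/323285) (a : ℕ → ℝ)
    (h0 : a 0 = -x₀ / 10) (h1 : a 1 = -1/6) (h2 : a 2 = 19949/321055) (h3 : a 3 = 0)
    (hrec : ∀ n, 4 ≤ n → n ≤ 17 →
      a n = -(6 / (((n : ℝ) + 5) * ((n : ℝ) - 2))) *
        ∑ k ∈ Finset.range (n - 4 + 1), a k * a (n - 4 - k))
    (Y₀ R : ℂ → ℂ)
    (hY₀ : ∀ ζ : ℂ, Y₀ ζ = -1 / ζ ^ 2 + ζ ^ 2 * ∑ n ∈ Finset.range 18, (a n : ℂ) * ζ ^ n)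
    (hR : ∀ ζ : ℂ, R ζ = deriv (deriv Y₀) ζ + 6 * (Y₀ ζ) ^ 2 - ((x₀ : ℂ) + ζ)) :
    ∃ p : Polynomial ℂ,
      (∀ j : ℕ, p.coeff j ≠ 0 → 18 ≤ j ∧ j ≤ 38) ∧
      (∀ ζ : ℂ, ζ ≠ 0 → R ζ = p.eval ζ) ∧
      (∀ ζ : ℂ, ‖ζ‖ = 7/10 → ‖R ζ‖ ≤ 1.311e-6) := by
  have hpoly : ∀ ζ : ℂ, ζ ≠ 0 →
      R ζ = ∑ j ∈ Finset.range 21, (residualCoeff a j : ℂ) * ζ ^ (18 + j) := by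
    intro ζ hζ
    have hY2 : 6 * Y₀ ζ ^ 2 = 6 / ζ ^ 4 - 12 * (∑ n ∈ Finset.range 18, (a n : ℂ) * ζ ^ n)
        + ζ ^ 4 * (6 * (∑ n ∈ Finset.range 18, (a n : ℂ) * ζ ^ n) ^ 2) := by
      rw [hY₀]
      field_simp
      ring
    have hq : ∑ j ∈ Finset.range 21, (residualCoeff a j : ℂ) * ζ ^ (18 + j) =
        ζ ^ 4 * ∑ j ∈ Finset.range 21, (residualCoeff a j : ℂ) * ζ ^ (14 + j) := by
      rw [Finset.mul_sum]
      exact Finset.sum_congr rfl fun j _ => by ring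
    rw [hR, deriv_deriv_laurent a Y₀ hY₀ ζ hζ, hY2, six_mul_sq_split, recursion_sum a hrec, hq]
    generalize ∑ j ∈ Finset.range 21, (residualCoeff a j : ℂ) * ζ ^ (14 + j) = S
    simp only [Finset.sum_range_succ, Finset.sum_range_zero, h0, h1, h3]
    push_cast
    ring
  refine ⟨∑ j ∈ Finset.range 21,
    Polynomial.C (residualCoeff a j : ℂ) * Polynomial.X ^ (18 + j), ?_, ?_, ?_⟩
  · intro i hi
    rw [Polynomial.finsetSum_coeff] at hi
    obtain ⟨j, hj, hne⟩ := Finset.exists_ne_zero_of_sum_ne_zero hi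
    rw [Polynomial.coeff_C_mul_X_pow] at hne
    have hj' := Finset.mem_range.mp hj
    have hij : i = 18 + j := by
      by_contra h
      exact hne (if_neg h)
    omega
  · intro ζ hζ
    rw [hpoly ζ hζ, Polynomial.eval_finsetSum]
    simp
  · intro ζ hζ
    have hζ0 : ζ ≠ 0 := by
      rintro rfl
      norm_num at hζ
    rw [hpoly ζ hζ0]
    refine (norm_sum_le _ _).trans ?_
    refine le_trans (le_of_eq ?_) (residual_bound x₀ hx₀ a h0 h1 h2 h3 hrec)
    refine Finset.sum_congr rfl fun j _ => ?_
    rw [norm_mul, norm_pow, hζ, Complex.norm_real, Real.norm_eq_abs]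
end

section
/- For every x ∈ [L_0, L], y_0(x) > 0 and y_0'(x) > 0. -/
/-! On `[L₀, L]` the function `y₀` is increasing, and `y₀ L₀ > 0` is a computation with rational
numbers, so everything rests on the sign of the derivative. The pole part contributes
`2 / (x - x₀)³ > 0`, and `τ` is an increasing affine map with values in `[-1, 1]`, so it is enough
that `P_u' > 0` on `[-1, 1]`.

Write `P_u'(t) = ∑ d_j t^j`. For `0 ≤ t ≤ 1` the powers `t^j` decrease in `j`, so by Abel summation
the value is at least the minimum of the partial sums `d_0 + ⋯ + d_n` (`abel_lower_bound`). All of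
these turn out to exceed `1/10` (`partial_sums_pos`). For `-1 ≤ t ≤ 0` the same argument applies to
the coefficients `(-1)^j d_j` at `-t` (`partial_sums_neg`). -/

open Set

noncomputable section

/-- Abel summation: on `[0, 1]` a power sum is bounded below by any lower bound of the partial sums
of its coefficients. -/
lemma abel_lower_bound (d : ℕ → ℝ) (m t : ℝ) (ht0 : 0 ≤ t) (ht1 : t ≤ 1) (N : ℕ)
    (hS : ∀ n ≤ N, m ≤ ∑ k ∈ Finset.range (n + 1), d k) :
    m ≤ ∑ k ∈ Finset.range (N + 1), d k * t ^ k := by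
  -- The bound that survives the induction keeps the excess of the last partial sum over `m`.
  have key : ∀ n ≤ N, m + ((∑ k ∈ Finset.range (n + 1), d k) - m) * t ^ n
      ≤ ∑ k ∈ Finset.range (n + 1), d k * t ^ k := by
    intro n
    induction n with
    | zero => intro _; simp
    | succ n ih =>
      intro hn
      have h1 := ih (by omega)
      have h2 := hS n (by omega)
      have h3 : t ^ (n + 1) ≤ t ^ n := pow_le_pow_of_le_one ht0 ht1 (by omega)
      have h4 := mul_le_mul_of_nonneg_left h3 (sub_nonneg.2 h2)
      rw [Finset.sum_range_succ _ (n + 1), Finset.sum_range_succ _ (n + 1)]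
      linarith
  have h1 := key N le_rfl
  have h2 := mul_nonneg (sub_nonneg.2 (hS N le_rfl)) (pow_nonneg ht0 N)
  linarith

/-- The derivative of `P_u`, with `P_u'(t) = ∑ (j + 1) c_{j+1} t^j`. -/
def dPu (t : ℝ) : ℝ := ∑ j ∈ Finset.range 22, (j + 1) * cP (j + 1) * t ^ j

lemma hasDerivAt_Pu (t : ℝ) : HasDerivAt Pu (dPu t) t := by
  have h : HasDerivAt (fun t => ∑ k ∈ Finset.range 23, cP k * t ^ k)
      (∑ k ∈ Finset.range 23, cP k * ((k : ℝ) * t ^ (k - 1))) t :=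
    HasDerivAt.fun_sum fun k _ => (hasDerivAt_pow k t).const_mul (cP k)
  suffices heq : dPu t = ∑ k ∈ Finset.range 23, cP k * ((k : ℝ) * t ^ (k - 1)) by
    rw [heq]
    exact h
  rw [Finset.sum_range_succ']
  simp only [dPu, Nat.cast_zero, zero_mul, mul_zero, add_zero, Nat.add_sub_cancel]
  refine Finset.sum_congr rfl fun j _ => ?_
  push_cast
  ring

set_option maxHeartbeats 4000000 in
/-- The partial sums of the coefficients of `P_u'(t)`. -/
lemma partial_sums_pos : ∀ n ≤ 21,
    (1 / 10 : ℝ) ≤ ∑ k ∈ Finset.range (n + 1), ((k : ℝ) + 1) * cP (k + 1) := by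
  intro n hn
  interval_cases n <;> norm_num [Finset.sum_range_succ, cP]

set_option maxHeartbeats 4000000 in
/-- The partial sums of the coefficients of `P_u'(-t)`. -/
lemma partial_sums_neg : ∀ n ≤ 21,
    (1 / 10 : ℝ) ≤ ∑ k ∈ Finset.range (n + 1), (-1) ^ k * (((k : ℝ) + 1) * cP (k + 1)) := by
  intro n hn
  interval_cases n <;> norm_num [Finset.sum_range_succ, cP]

lemma dPu_pos {t : ℝ} (h0 : -1 ≤ t) (h1 : t ≤ 1) : 0 < dPu t := by
  refine lt_of_lt_of_le (by norm_num : (0 : ℝ) < 1 / 10) ?_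
  rcases le_total 0 t with ht | ht
  · exact abel_lower_bound (fun j => ((j : ℝ) + 1) * cP (j + 1)) (1 / 10) t ht h1 21
      partial_sums_pos
  · refine (abel_lower_bound (fun j => (-1) ^ j * (((j : ℝ) + 1) * cP (j + 1))) (1 / 10) (-t)
      (by linarith) (by linarith) 21 partial_sums_neg).trans_eq (Finset.sum_congr rfl fun k _ => ?_)
    have h3 : (-1 : ℝ) ^ k * (-t) ^ k = t ^ k := by rw [← mul_pow]; ring
    rw [← h3]
    ring

lemma hasDerivAt_y₀ {x : ℝ} (hx : x - x₀ ≠ 0) :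
    HasDerivAt y₀ (2 / (x - x₀) ^ 3 + dPu (τP1 x) * (1 / ((LP1 - x₀ - rP1) / 2))) x := by
  have hτ : HasDerivAt τP1 (1 / ((LP1 - x₀ - rP1) / 2)) x :=
    ((hasDerivAt_id x).sub_const _).div_const _
  have hpole : HasDerivAt (fun x => -1 / (x - x₀) ^ 2) (2 / (x - x₀) ^ 3) x := by
    have h := (hasDerivAt_const x (-1 : ℝ)).fun_div (((hasDerivAt_id x).sub_const x₀).fun_pow 2)
      (pow_ne_zero 2 hx)
    refine h.congr_deriv ?_
    simp only [id]
    field_simp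
    ring
  exact hpole.add ((hasDerivAt_Pu (τP1 x)).comp x hτ)

lemma deriv_y₀_pos {x : ℝ} (hx : x ∈ Icc L₀ LP1) : 0 < deriv y₀ x := by
  have hl : -49 / 100 ≤ x := hx.1
  have hr : x ≤ 11 / 2 := hx.2
  have hpos : 0 < x - x₀ := by rw [x₀]; linarith
  have hlen : 0 < (LP1 - x₀ - rP1) / 2 := by norm_num [LP1, x₀, rP1]
  have h0 : -1 ≤ τP1 x := by
    rw [τP1, le_div_iff₀ hlen]
    norm_num only [LP1, x₀, rP1]
    linarith
  have h1 : τP1 x ≤ 1 := by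
    rw [τP1, div_le_iff₀ hlen]
    norm_num only [LP1, x₀, rP1]
    linarith
  rw [(hasDerivAt_y₀ hpos.ne').deriv]
  have := dPu_pos h0 h1
  positivity

lemma y₀_L₀_pos : 0 < y₀ L₀ := by
  norm_num [y₀, Pu, τP1, L₀, x₀, LP1, rP1, cP, Finset.sum_range_succ]

/-- For every `x ∈ [L₀, L]`, `y₀(x) > 0` and `y₀'(x) > 0`. -/
theorem statement8 : ∀ x ∈ Icc L₀ LP1, 0 < y₀ x ∧ 0 < deriv y₀ x := by
  intro x hx
  refine ⟨?_, deriv_y₀_pos hx⟩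
  have hmono : StrictMonoOn y₀ (Icc L₀ LP1) := by
    refine strictMonoOn_of_deriv_pos (convex_Icc _ _) (fun z hz => ?_) fun z hz =>
      deriv_y₀_pos (interior_subset hz)
    -- A nonzero derivative certifies differentiability.
    exact (differentiableAt_of_deriv_ne_zero (deriv_y₀_pos hz).ne').continuousAt.continuousWithinAt
  exact y₀_L₀_pos.trans_le
    (hmono.monotoneOn (left_mem_Icc.2 (hx.1.trans hx.2)) hx hx.1)

end
end
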